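/- For every even integer k ≥ 4, the limit as n → ∞ of S_k(n)^{1/π(n)} exists and equals 2^α, where α := ∑_{i=1}^∞ (1/i)·log₂(1 + 1/i); that is, S_k(n) = (2^α + o(1))^{π(n)}. -/

import Mathlib

open scoped Classical

/-- A finite set of naturals is multiplicative `k`-Sidon if it contains no `2k`
distinct elements `a₁, …, aₖ, b₁, …, bₖ` with `a₁⋯aₖ = b₁⋯bₖ`. -/
def MulKSidon (k : ℕ) (A : Finset ℕ) : Prop :=
  ¬ ∃ a b : Fin k → ℕ, (∀ i, a i ∈ A) ∧ (∀ i, b i ∈ A) ∧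
    Function.Injective (Sum.elim a b) ∧ (∏ i, a i) = (∏ i, b i)

/-- `Sk k n`: the number of multiplicative `k`-Sidon subsets of `{1, …, n}`. -/
noncomputable def Sk (k n : ℕ) : ℕ :=
  ((Finset.Icc 1 n).powerset.filter (fun A => MulKSidon k A)).card

/-- `α = ∑_{i=1}^∞ (1/i)·log₂(1 + 1/i)`. -/
noncomputable def alpha : ℝ :=
  ∑' i : ℕ, (1 / ((i : ℝ) + 1)) * Real.logb 2 (1 + 1 / ((i : ℝ) + 1))

namespace SidonAux

/-- Plain multiplicative Sidon. -/
def Sid (B : Finset ℕ) : Prop :=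
  ∀ x ∈ B, ∀ y ∈ B, ∀ z ∈ B, ∀ w ∈ B, x ≠ y → x ≠ z → x ≠ w → y ≠ z → y ≠ w → z ≠ w →
    x * y ≠ z * w

lemma exists_quads (j : ℕ) : ∀ A : Finset ℕ,
    (∃ X Y : Finset ℕ, X ⊆ A ∧ Y ⊆ A ∧ Disjoint X Y ∧ X.card = 2 * j ∧ Y.card = 2 * j ∧
      ∏ x ∈ X, x = ∏ y ∈ Y, y) ∨
    (∃ B ⊆ A, Sid B ∧ (A \ B).card ≤ 4 * j) := by
  induction j with
  | zero => intro A; left; exact ⟨∅, ∅, by simp⟩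
  | succ j ih =>
    intro A
    by_cases hA : Sid A
    · right; exact ⟨A, subset_rfl, hA, by simp⟩
    unfold Sid at hA
    push Not at hA
    obtain ⟨x, hx, y, hy, z, hz, w, hw, h1, h2, h3, h4, h5, h6, he⟩ := hA
    rcases ih (A \ {x, y, z, w}) with ⟨X, Y, hX, hY, hd, cX, cY, hp⟩ | ⟨B, hB, hS, hc⟩
    · left
      have nX : ∀ a ∈ X, a ∈ A ∧ a ≠ x ∧ a ≠ y ∧ a ≠ z ∧ a ≠ w := by
        intro a ha; have := hX ha; simp at this; tauto
      have nY : ∀ a ∈ Y, a ∈ A ∧ a ≠ x ∧ a ≠ y ∧ a ≠ z ∧ a ≠ w := by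
        intro a ha; have := hY ha; simp at this; tauto
      have hyX : y ∉ X := fun h => (nX y h).2.2.1 rfl
      have hxX : x ∉ insert y X := by
        simp only [Finset.mem_insert, not_or]; exact ⟨h1, fun h => (nX x h).2.1 rfl⟩
      have hwY : w ∉ Y := fun h => (nY w h).2.2.2.2 rfl
      have hzY : z ∉ insert w Y := by
        simp only [Finset.mem_insert, not_or]; exact ⟨h6, fun h => (nY z h).2.2.2.1 rfl⟩
      refine ⟨insert x (insert y X), insert z (insert w Y), ?_, ?_, ?_, ?_, ?_, ?_⟩
      · intro a ha; simp only [Finset.mem_insert] at ha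
        rcases ha with rfl | rfl | ha <;> first | assumption | exact (nX a ha).1
      · intro a ha; simp only [Finset.mem_insert] at ha
        rcases ha with rfl | rfl | ha <;> first | assumption | exact (nY a ha).1
      · rw [Finset.disjoint_left]
        intro a ha hb
        simp only [Finset.mem_insert] at ha hb
        have hd' : a ∈ X → a ∉ Y := fun h => Finset.disjoint_left.1 hd h
        have e1 := nX a
        have e2 := nY a
        rcases ha with rfl | rfl | ha <;> rcases hb with rfl | rfl | hb <;> tauto
      · rw [Finset.card_insert_of_notMem hxX, Finset.card_insert_of_notMem hyX]; omega
      · rw [Finset.card_insert_of_notMem hzY, Finset.card_insert_of_notMem hwY]; omega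
      · rw [Finset.prod_insert hxX, Finset.prod_insert hyX, Finset.prod_insert hzY,
          Finset.prod_insert hwY, hp, ← mul_assoc, ← mul_assoc, he]
    · right
      refine ⟨B, hB.trans Finset.sdiff_subset, hS, ?_⟩
      have : A \ B ⊆ (A \ {x, y, z, w}) \ B ∪ {x, y, z, w} := by
        intro a ha; simp only [Finset.mem_union, Finset.mem_sdiff] at ha ⊢; tauto
      have h4 : ({x, y, z, w} : Finset ℕ).card ≤ 4 := Finset.card_le_four
      calc _ ≤ _ := Finset.card_le_card this
        _ ≤ _ := Finset.card_union_le _ _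
        _ ≤ _ := by omega

lemma exists_sid {k : ℕ} (hk : Even k) {A : Finset ℕ} (hA : MulKSidon k A) :
    ∃ B ⊆ A, Sid B ∧ (A \ B).card ≤ 2 * k := by
  obtain ⟨j, rfl⟩ := hk
  rcases exists_quads j A with ⟨X, Y, hX, hY, hd, cX, cY, hp⟩ | ⟨B, hB, hS, hc⟩
  · exfalso
    have cX' : X.card = j + j := by omega
    have cY' : Y.card = j + j := by omega
    refine hA ⟨X.orderEmbOfFin cX', Y.orderEmbOfFin cY', fun i => hX (X.orderEmbOfFin_mem cX' i),
      fun i => hY (Y.orderEmbOfFin_mem cY' i), ?_, ?_⟩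
    · refine Function.Injective.sumElim (X.orderEmbOfFin cX').injective
        (Y.orderEmbOfFin cY').injective ?_
      intro a b h
      exact Finset.disjoint_left.1 hd (X.orderEmbOfFin_mem cX' a) (h ▸ Y.orderEmbOfFin_mem cY' b)
    · have key : ∀ (Z : Finset ℕ) (c : Z.card = j + j), ∏ i, Z.orderEmbOfFin c i = ∏ z ∈ Z, z := by
        intro Z c
        conv_rhs => rw [← Finset.image_orderEmbOfFin_univ Z c]
        rw [Finset.prod_image]
        exact fun a _ b _ h => (Z.orderEmbOfFin c).injective h
      rw [key, key, hp]
  · exact ⟨B, hB, hS, by omega⟩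

/-- Decomposition lemma. -/
lemma decomp {s n a : ℕ} (hs : 1 ≤ s) (hn : n < s ^ 6) (ha : 1 ≤ a) (han : a ≤ n)
    (hp : ∀ p, p.Prime → p ∣ a → p ≤ s ^ 4) :
    ∃ u v, a = u * v ∧ 1 ≤ u ∧ u ≤ s ^ 4 ∧ 1 ≤ v ∧ v ≤ s ^ 3 := by
  suffices h : ∃ d e, a = d * e ∧ d ≤ s ^ 4 ∧ e ≤ s ^ 4 by
    obtain ⟨d, e, rfl, hd, he⟩ := h
    have hd1 : 1 ≤ d := Nat.pos_of_ne_zero (by rintro rfl; simp at ha)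
    have he1 : 1 ≤ e := Nat.pos_of_ne_zero (by rintro rfl; simp at ha)
    by_cases h : e ≤ s ^ 3
    · exact ⟨d, e, rfl, hd1, hd, he1, h⟩
    · refine ⟨e, d, mul_comm _ _, he1, he, hd1, ?_⟩
      by_contra h'
      push Not at h h'
      have : s ^ 3 * s ^ 3 < d * e := by gcongr
      have e6 : s ^ 3 * s ^ 3 = s ^ 6 := by ring
      omega
  by_cases h2 : a < s ^ 2
  · refine ⟨a, 1, by simp, ?_, Nat.one_le_pow _ _ hs⟩
    exact h2.le.trans (Nat.pow_le_pow_right hs (by norm_num))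
  push Not at h2
  have hex : ∃ d, d ∣ a ∧ s ^ 2 ≤ d := ⟨a, dvd_rfl, h2⟩
  obtain ⟨hd, hsd⟩ := Nat.find_spec hex
  have hmin := fun m (h : m < Nat.find hex) => Nat.find_min hex h
  generalize Nat.find hex = d at *
  clear hex
  obtain ⟨e, rfl⟩ := hd
  have hd1 : 1 ≤ d := Nat.pos_of_ne_zero (by intro h; simp [h] at ha)
  refine ⟨d, e, rfl, ?_, ?_⟩
  · by_contra hlt
    push Not at hlt
    have hd2 : d ≠ 1 := by
      have := Nat.one_le_pow 4 s hs
      omega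
    obtain ⟨p, pp, f, hf⟩ := Nat.exists_prime_and_dvd hd2
    have hpd : p ∣ d := ⟨f, hf⟩
    have hple := hp p pp (hpd.mul_right e)
    have hf1 : 0 < f := Nat.pos_of_ne_zero (by rintro rfl; simp at hf; omega)
    have hfd : f < d := by rw [hf]; exact lt_mul_of_one_lt_left hf1 pp.one_lt
    have h1 : f < s ^ 2 := by
      by_contra h; push Not at h
      exact hmin f hfd ⟨(Dvd.intro_left p hf.symm).mul_right e, h⟩
    have h3 : p < s ^ 2 := by
      by_contra h; push Not at h
      exact hmin p (by omega) ⟨hpd.mul_right e, h⟩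
    have : p * f ≤ s ^ 2 * s ^ 2 := by gcongr
    have e4 : s ^ 2 * s ^ 2 = s ^ 4 := by ring
    omega
  · by_contra hlt
    push Not at hlt
    have : s ^ 2 * s ^ 4 ≤ d * e := by gcongr
    have e6 : s ^ 2 * s ^ 4 = s ^ 6 := by ring
    omega

lemma small_bound {s n : ℕ} (hs : 1 ≤ s) (hn : n < s ^ 6) {B : Finset ℕ}
    (hB : B ⊆ Finset.Icc 1 n) (hS : Sid B) (hp : ∀ a ∈ B, ∀ p, p.Prime → p ∣ a → p ≤ s ^ 4) :
    B.card ≤ 2 * s ^ 5 := by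
  have hdec : ∀ a : ℕ, ∃ u v, a ∈ B → (a = u * v ∧ 1 ≤ u ∧ u ≤ s ^ 4 ∧ 1 ≤ v ∧ v ≤ s ^ 3) := by
    intro a
    by_cases ha : a ∈ B
    · obtain ⟨h1, h2⟩ := Finset.mem_Icc.1 (hB ha)
      obtain ⟨u, v, h⟩ := decomp hs hn h1 h2 (hp a ha)
      exact ⟨u, v, fun _ => h⟩
    · exact ⟨0, 0, fun h => absurd h ha⟩
  choose u v huv using hdec
  have hpairs : ((B.offDiag).filter (fun q => u q.1 = u q.2)).card ≤
      ((Finset.Icc 1 (s ^ 3)) ×ˢ (Finset.Icc 1 (s ^ 3))).card := by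
    apply Finset.card_le_card_of_injOn (fun q => (v q.1, v q.2))
    · rintro ⟨a, a'⟩ h
      simp only [Finset.coe_filter, Finset.mem_offDiag, Set.mem_ofPred_eq] at h
      have h1 := huv a h.1.1
      have h2 := huv a' h.1.2.1
      simp only [Finset.coe_product, Set.mem_prod, Finset.coe_Icc, Set.mem_Icc]
      tauto
    · rintro ⟨a, a'⟩ h ⟨b, b'⟩ h' heq
      simp only [Finset.coe_filter, Finset.mem_offDiag, Set.mem_ofPred_eq] at h h'
      simp only [Prod.mk.injEq] at heq ⊢
      obtain ⟨⟨ha, ha', haa⟩, hua⟩ := h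
      obtain ⟨⟨hb, hb', hbb⟩, hub⟩ := h'
      obtain ⟨e1, -⟩ := huv a ha
      obtain ⟨e2, -⟩ := huv a' ha'
      obtain ⟨e3, -⟩ := huv b hb
      obtain ⟨e4, -⟩ := huv b' hb'
      by_cases huw : u a = u b
      · constructor
        · rw [e1, e3, huw, heq.1]
        · rw [e2, e4, ← hua, ← hub, huw, heq.2]
      · exfalso
        have n1 : a ≠ b := fun h => huw (by rw [h])
        have n2 : a ≠ b' := fun h => huw (by rw [hub, h])
        have n3 : a' ≠ b := fun h => huw (by rw [hua, h])
        have n4 : a' ≠ b' := fun h => huw (by rw [hua, hub, h])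
        refine hS a ha b' hb' a' ha' b hb n2 haa n1 (Ne.symm n4) (Ne.symm hbb) n3 ?_
        rw [e1, e2, e3, e4, ← hua, ← hub, ← heq.1, ← heq.2]; ring
  have hmaps : ∀ a ∈ B, u a ∈ Finset.Icc 1 (s ^ 4) := by
    intro a ha; have := huv a ha; simp; tauto
  have hcard := Finset.card_eq_sum_card_fiberwise hmaps
  have hoff : ((B.offDiag).filter (fun q => u q.1 = u q.2)).card =
      ∑ w ∈ Finset.Icc 1 (s ^ 4), ((B.filter (fun a => u a = w)).offDiag).card := by
    rw [Finset.card_eq_sum_card_fiberwise (f := fun q => u q.1) (t := Finset.Icc 1 (s ^ 4))]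
    · apply Finset.sum_congr rfl
      intro w _
      congr 1
      ext ⟨a, b⟩
      simp only [Finset.mem_filter, Finset.mem_offDiag]
      constructor
      · rintro ⟨⟨⟨h1, h2, h3⟩, h4⟩, h5⟩; exact ⟨⟨h1, h5⟩, ⟨h2, h4 ▸ h5⟩, h3⟩
      · rintro ⟨⟨h1, h5⟩, ⟨h2, h4⟩, h3⟩; exact ⟨⟨⟨h1, h2, h3⟩, h5.trans h4.symm⟩, h5⟩
    · rintro ⟨a, b⟩ h
      simp only [Finset.coe_filter, Finset.mem_offDiag, Set.mem_ofPred_eq] at h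
      exact hmaps a h.1.1
  have hd : ∀ d : ℕ, s * d ≤ s * s + (d * d - d) := by
    intro d
    rcases le_or_gt d s with h | h
    · have : s * d ≤ s * s := by gcongr
      omega
    · have h1 : (s + 1) * d ≤ d * d := by gcongr; omega
      have h2 : (s + 1) * d = s * d + d := by ring
      omega
  have hfin : s * B.card ≤ s * (2 * s ^ 5) := by
    calc s * B.card = ∑ w ∈ Finset.Icc 1 (s ^ 4), s * (B.filter (fun a => u a = w)).card := by
          rw [hcard, Finset.mul_sum]
      _ ≤ ∑ w ∈ Finset.Icc 1 (s ^ 4), (s * s + ((B.filter (fun a => u a = w)).offDiag).card) := by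
          apply Finset.sum_le_sum; intro w _; rw [Finset.offDiag_card]; exact hd _
      _ ≤ s ^ 4 * (s * s) + s ^ 3 * s ^ 3 := by
          rw [Finset.sum_add_distrib, ← hoff]
          refine Nat.add_le_add (by simp) (hpairs.trans (by simp))
      _ = _ := by ring
  exact Nat.le_of_mul_le_mul_left hfin hs

/-- The core attached to a choice function. -/
noncomputable def core (P : Finset ℕ) (g : (p : ℕ) → p ∈ P → ℕ) : Finset ℕ :=
  (P.attach.image (fun p => p.1 * g p.1 p.2)).erase 0

lemma mem_core {P : Finset ℕ} {g : (p : ℕ) → p ∈ P → ℕ} {a : ℕ} :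
    a ∈ core P g ↔ a ≠ 0 ∧ ∃ p, ∃ h : p ∈ P, p * g p h = a := by
  simp [core]

lemma small_sets (n R : ℕ) :
    (((Finset.Icc 1 n).powerset).filter (fun D => D.card ≤ R)).card ≤ (n + 1) ^ R := by
  induction R with
  | zero =>
    have : ((Finset.Icc 1 n).powerset).filter (fun D => D.card ≤ 0) ⊆ {∅} := by
      intro D hD; simp at hD; simp [hD.2]
    simpa using Finset.card_le_card this
  | succ R ih =>
    have : ((Finset.Icc 1 n).powerset).filter (fun D => D.card ≤ R + 1) ⊆
        Finset.image₂ (fun x (D : Finset ℕ) => if x = 0 then D else insert x D)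
          (Finset.range (n + 1))
          (((Finset.Icc 1 n).powerset).filter (fun D => D.card ≤ R)) := by
      intro D hD
      simp only [Finset.mem_filter, Finset.mem_powerset] at hD
      rw [Finset.mem_image₂]
      rcases D.eq_empty_or_nonempty with rfl | ⟨x, hx⟩
      · exact ⟨0, by simp, ∅, by simp, by simp⟩
      · have hx' := Finset.mem_Icc.1 (hD.1 hx)
        refine ⟨x, by simp; omega, D.erase x, ?_, ?_⟩
        · simp only [Finset.mem_filter, Finset.mem_powerset]
          refine ⟨(Finset.erase_subset _ _).trans hD.1, ?_⟩
          rw [Finset.card_erase_of_mem hx]; omega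
        · rw [if_neg (by omega), Finset.insert_erase hx]
    calc _ ≤ _ := Finset.card_le_card this
      _ ≤ _ := Finset.card_image₂_le _ _ _
      _ ≤ (n + 1) * (n + 1) ^ R := by rw [Finset.card_range]; gcongr
      _ = _ := by ring

lemma structure_lemma {k s n : ℕ} (hk : Even k) (hs : 1 ≤ s) (hn : n < s ^ 6) {A : Finset ℕ}
    (hAn : A ⊆ Finset.Icc 1 n) (hA : MulKSidon k A)
    (P : Finset ℕ) (hP : P = (Finset.Icc 1 n).filter (fun p => p.Prime ∧ s ^ 4 < p)) :
    ∃ g ∈ P.pi (fun p => Finset.range (n / p + 1)),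
      ∃ D ∈ ((Finset.Icc 1 n).powerset).filter (fun D => D.card ≤ 2 * k + s ^ 4 + 2 * s ^ 5),
        core P g ∪ D = A := by
  obtain ⟨B, hBA, hS, hc⟩ := exists_sid hk hA
  have hPm : ∀ p, p ∈ P ↔ (1 ≤ p ∧ p ≤ n) ∧ p.Prime ∧ s ^ 4 < p := by
    intro p; rw [hP]; simp
  have hBn := hBA.trans hAn
  -- choice for each prime
  have hch : ∀ p : ℕ, ∃ i, (i ≤ n / p ∧ (i ≠ 0 → p * i ∈ B)) ∧ (i = 0 → p ∈ P → ∀ j, p * j ∉ B) := by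
    intro p
    by_cases h : p ∈ P ∧ ∃ j, p * j ∈ B
    · obtain ⟨hp, j, hj⟩ := h
      have h1 := Finset.mem_Icc.1 (hBn hj)
      refine ⟨j, ⟨?_, fun _ => hj⟩, ?_⟩
      · rw [Nat.le_div_iff_mul_le ((hPm p).1 hp).1.1, mul_comm]; exact h1.2
      · rintro rfl; simp at h1
    · exact ⟨0, ⟨by simp, by simp⟩, fun _ hp j hj => h ⟨hp, j, hj⟩⟩
  choose c hc1 hc2 using hch
  let g : (p : ℕ) → p ∈ P → ℕ := fun p _ => c p
  have hcoreB : core P g ⊆ B := by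
    intro a ha
    obtain ⟨h0, p, hp, rfl⟩ := mem_core.1 ha
    exact (hc1 p).2 (by rintro h; simp [g, h] at h0)
  refine ⟨g, ?_, A \ core P g, ?_, ?_⟩
  · simp only [Finset.mem_pi, Finset.mem_range]
    intro p hp
    exact Nat.lt_succ_of_le (hc1 p).1
  · simp only [Finset.mem_filter, Finset.mem_powerset]
    refine ⟨Finset.sdiff_subset.trans hAn, ?_⟩
    set B1 := (B.filter (fun a => ∃ p ∈ P, p ∣ a)) \ core P g with hB1
    set B2 := B.filter (fun a => ¬ ∃ p ∈ P, p ∣ a) with hB2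
    have hsub : A \ core P g ⊆ (A \ B) ∪ B1 ∪ B2 := by
      intro a ha
      simp only [Finset.mem_sdiff, Finset.mem_union, hB1, hB2, Finset.mem_filter] at ha ⊢
      by_cases h1 : a ∈ B
      · by_cases h2 : ∃ p ∈ P, p ∣ a
        · exact Or.inl (Or.inr ⟨⟨h1, h2⟩, ha.2⟩)
        · exact Or.inr ⟨h1, h2⟩
      · exact Or.inl (Or.inl ⟨ha.1, h1⟩)
    have hB2c : B2.card ≤ 2 * s ^ 5 := by
      apply small_bound hs hn ((Finset.filter_subset _ _).trans hBn)
      · intro x hx y hy z hz w hw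
        exact hS x (Finset.filter_subset _ _ hx) y (Finset.filter_subset _ _ hy)
          z (Finset.filter_subset _ _ hz) w (Finset.filter_subset _ _ hw)
      · intro a ha p pp hpa
        simp only [hB2, Finset.mem_filter] at ha
        by_contra hlt
        push Not at hlt
        have h1 := Finset.mem_Icc.1 (hBn ha.1)
        exact ha.2 ⟨p, (hPm p).2 ⟨⟨pp.one_le, (Nat.le_of_dvd h1.1 hpa).trans h1.2⟩, pp, hlt⟩, hpa⟩
    have hB1c : B1.card ≤ s ^ 4 := by
      have hq : ∀ a, ∃ p i, a ∈ B1 → p ∈ P ∧ a = p * i := by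
        intro a
        by_cases ha : a ∈ B1
        · have ha' := ha
          simp only [hB1, Finset.mem_sdiff, Finset.mem_filter] at ha'
          obtain ⟨⟨_, p, hp, i, hi⟩, _⟩ := ha'
          exact ⟨p, i, fun _ => ⟨hp, hi⟩⟩
        · exact ⟨0, 0, fun h => absurd h ha⟩
      choose P' I hPI using hq
      -- facts
      have bnd : ∀ p ∈ P, ∀ i, p * i ∈ B → 1 ≤ i ∧ i ≤ s ^ 2 ∧ ¬ p ∣ i := by
        intro p hp i hi
        have h1 := Finset.mem_Icc.1 (hBn hi)
        have h2 := (hPm p).1 hp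
        have hi1 : 1 ≤ i := Nat.pos_of_ne_zero (by rintro rfl; simp at h1)
        have hi2 : i ≤ s ^ 2 := by
          by_contra h
          push Not at h
          have : s ^ 4 * s ^ 2 ≤ p * i := Nat.mul_le_mul h2.2.2.le h.le
          have e6 : s ^ 4 * s ^ 2 = s ^ 6 := by ring
          omega
        refine ⟨hi1, hi2, fun h => ?_⟩
        have := Nat.le_of_dvd hi1 h
        have e4 : s ^ 2 ≤ s ^ 4 := Nat.pow_le_pow_right hs (by norm_num)
        omega
      have hfact : ∀ a ∈ B1, P' a ∈ P ∧ a = P' a * I a ∧ a ∈ B ∧ P' a * I a ∈ B ∧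
          P' a * c (P' a) ∈ B ∧ I a ≠ c (P' a) := by
        intro a ha
        obtain ⟨h1, h2⟩ := hPI a ha
        have ha' := ha
        simp only [hB1, Finset.mem_sdiff, Finset.mem_filter] at ha'
        obtain ⟨⟨haB, _⟩, hnc⟩ := ha'
        have haB' : P' a * I a ∈ B := h2 ▸ haB
        have hc0 : c (P' a) ≠ 0 := fun h => hc2 _ h h1 _ haB'
        refine ⟨h1, h2, haB, haB', (hc1 _).2 hc0, ?_⟩
        intro h
        apply hnc
        rw [mem_core]
        have := Finset.mem_Icc.1 (hBn haB)
        exact ⟨by omega, P' a, h1, by simp only [g]; rw [← h]; exact h2.symm⟩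
      have : B1.card ≤ ((Finset.Icc 1 (s ^ 2)) ×ˢ (Finset.Icc 1 (s ^ 2))).card := by
        apply Finset.card_le_card_of_injOn (fun a => (I a, c (P' a)))
        · intro a ha
          obtain ⟨h1, h2, h3, h4, h5, h6⟩ := hfact a ha
          have := bnd _ h1 _ h4
          have := bnd _ h1 _ h5
          simp only [Finset.coe_product, Set.mem_prod, Finset.coe_Icc, Set.mem_Icc]
          tauto
        · intro a ha b hb hab
          simp only [Prod.mk.injEq] at hab
          obtain ⟨h1, h2, h3, h4, h5, h6⟩ := hfact a ha
          obtain ⟨k1, k2, k3, k4, k5, k6⟩ := hfact b hb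
          by_contra hne
          have hpq : P' a ≠ P' b := by
            intro h; apply hne; rw [h2, k2, h, hab.1]
          rw [← hab.1] at k4
          rw [← hab.2] at k5
          have p1 := ((hPm _).1 h1).2.1
          have p2 := ((hPm _).1 k1).2.1
          have b1 := bnd _ h1 _ h4
          have b2 := bnd _ h1 _ h5
          generalize P' a = p at *
          generalize P' b = q at *
          generalize I a = i at *
          generalize c p = j at *
          have hndq : ¬ p ∣ q := fun h => hpq ((Nat.prime_dvd_prime_iff_eq p1 p2).1 h)
          have key : ∀ x y, ¬ p ∣ y → p * x ≠ q * y := by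
            intro x y hy h
            rcases (Nat.Prime.dvd_mul p1).1 (Dvd.intro _ h) with h | h
            · exact hndq h
            · exact hy h
          refine hS (p * i) h4 (q * j) k5 (p * j) h5 (q * i) k4 (key _ _ b2.2.2) ?_
            (key _ _ b1.2.2) (Ne.symm (key _ _ b2.2.2)) ?_ (key _ _ b1.2.2) (by ring)
          · intro h; exact h6 (Nat.eq_of_mul_eq_mul_left p1.pos h)
          · intro h; exact h6 (Nat.eq_of_mul_eq_mul_left p2.pos h).symm
      simp only [Finset.card_product, Nat.card_Icc, Nat.add_sub_cancel] at this
      calc _ ≤ _ := this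
        _ = _ := by ring
    calc _ ≤ _ := Finset.card_le_card hsub
      _ ≤ _ := Finset.card_union_le _ _
      _ ≤ _ := Nat.add_le_add_right (Finset.card_union_le _ _) _
      _ ≤ _ := by omega
  · exact Finset.union_sdiff_of_subset (hcoreB.trans hBA)

lemma upper {k s n : ℕ} (hk : Even k) (hs : 1 ≤ s) (hn : n < s ^ 6) :
    Sk k n ≤ (∏ p ∈ (Finset.Icc 1 n).filter Nat.Prime, (n / p + 1)) *
      (n + 1) ^ (2 * k + s ^ 4 + 2 * s ^ 5) := by
  unfold Sk
  set P := (Finset.Icc 1 n).filter (fun p => p.Prime ∧ s ^ 4 < p) with hP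
  have hsub : (Finset.Icc 1 n).powerset.filter (fun A => MulKSidon k A) ⊆
      Finset.image₂ (fun g D => core P g ∪ D) (P.pi (fun p => Finset.range (n / p + 1)))
        (((Finset.Icc 1 n).powerset).filter (fun D => D.card ≤ 2 * k + s ^ 4 + 2 * s ^ 5)) := by
    intro A hA
    simp only [Finset.mem_filter, Finset.mem_powerset] at hA
    rw [Finset.mem_image₂]
    exact structure_lemma hk hs hn hA.1 hA.2 P hP
  calc _ ≤ _ := Finset.card_le_card hsub
    _ ≤ _ := Finset.card_image₂_le _ _ _
    _ ≤ _ := by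
      refine Nat.mul_le_mul ?_ (small_sets _ _)
      rw [Finset.card_pi]
      simp only [Finset.card_range]
      apply Finset.prod_le_prod_of_subset_of_one_le'
      · intro p hp; simp [hP] at hp ⊢; tauto
      · intros; exact Nat.le_add_left _ _

lemma lower {k n : ℕ} (hk : 1 ≤ k) :
    ∏ p ∈ (Finset.Icc 1 n).filter (fun p => p.Prime ∧ n < p * p), (n / p + 1) ≤ Sk k n := by
  set P := (Finset.Icc 1 n).filter (fun p => p.Prime ∧ n < p * p) with hP
  have hPm : ∀ p, p ∈ P ↔ (1 ≤ p ∧ p ≤ n) ∧ p.Prime ∧ n < p * p := by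
    intro p; rw [hP]; simp
  have hcard : (P.pi (fun p => Finset.range (n / p + 1))).card = ∏ p ∈ P, (n / p + 1) := by
    rw [Finset.card_pi]; simp
  have key : ∀ g ∈ P.pi (fun p => Finset.range (n / p + 1)), ∀ p ∈ P, ∀ q, ∀ hq : q ∈ P,
      q * g q hq ≠ 0 → p ∣ q * g q hq → p = q := by
    intro g hg p hp q hq h0 hd
    have hp' := (hPm p).1 hp
    have hq' := (hPm q).1 hq
    rcases (Nat.Prime.dvd_mul hp'.2.1).1 hd with h | h
    · exact (Nat.prime_dvd_prime_iff_eq hp'.2.1 hq'.2.1).1 h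
    · exfalso
      have h1 := Finset.mem_pi.1 hg q hq
      have hg0 : 0 < g q hq := Nat.pos_of_ne_zero (by intro h; simp [h] at h0)
      have h2 := Nat.le_of_dvd hg0 h
      have h3 : p ≤ n / q := by simp at h1; omega
      rw [Nat.le_div_iff_mul_le hq'.1.1] at h3
      have : n < p * q := by
        rcases le_total p q with h | h
        · exact hp'.2.2.trans_le (by gcongr)
        · exact hq'.2.2.trans_le (by gcongr)
      omega
  rw [← hcard]
  unfold Sk
  apply Finset.card_le_card_of_injOn (core P)
  · intro g hg
    simp only [Finset.coe_filter, Finset.mem_powerset, Set.mem_ofPred_eq]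
    constructor
    · intro a ha
      obtain ⟨h0, p, hp, rfl⟩ := mem_core.1 ha
      have h1 := Finset.mem_pi.1 hg p hp
      have h3 : g p hp ≤ n / p := by simp at h1; omega
      rw [Nat.le_div_iff_mul_le ((hPm p).1 hp).1.1] at h3
      rw [Finset.mem_Icc]
      exact ⟨by omega, by rw [mul_comm]; exact h3⟩
    · rintro ⟨a, b, ha, hb, hinj, he⟩
      let i0 : Fin k := ⟨0, hk⟩
      obtain ⟨h0, p, hp, hpa⟩ := mem_core.1 (ha i0)
      have hd : p ∣ ∏ i, b i := by
        rw [← he]; exact (Dvd.intro _ hpa).trans (Finset.dvd_prod_of_mem _ (Finset.mem_univ _))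
      obtain ⟨j, -, hj⟩ := (Nat.Prime.prime ((hPm p).1 hp).2.1).exists_mem_finset_dvd hd
      obtain ⟨h0', q, hq, hqb⟩ := mem_core.1 (hb j)
      have hpq : p = q := key g hg p hp q hq (by rw [hqb]; exact h0') (by rw [hqb]; exact hj)
      subst hpq
      have : Sum.elim a b (Sum.inl i0) = Sum.elim a b (Sum.inr j) := by
        simp only [Sum.elim_inl, Sum.elim_inr]; rw [← hpa, ← hqb]
      exact Sum.inl_ne_inr (hinj this)
  · have main : ∀ g ∈ P.pi (fun p => Finset.range (n / p + 1)),
        ∀ g' ∈ P.pi (fun p => Finset.range (n / p + 1)), core P g = core P g' →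
        ∀ p (hp : p ∈ P), g p hp ≠ 0 → g p hp = g' p hp := by
      intro g hg g' hg' h p hp h0
      have hpp := ((hPm p).1 hp).1.1
      have hm : p * g p hp ∈ core P g := mem_core.2 ⟨by positivity, p, hp, rfl⟩
      rw [h] at hm
      obtain ⟨h1, q, hq, hqe⟩ := mem_core.1 hm
      have hpq : p = q := key g' hg' p hp q hq (by rw [hqe]; exact h1)
        (by rw [hqe]; exact dvd_mul_right _ _)
      subst hpq
      exact (Nat.eq_of_mul_eq_mul_left hpp hqe).symm
    intro g hg g' hg' h
    funext p hp
    by_cases h0 : g p hp = 0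
    · by_cases h1 : g' p hp = 0
      · rw [h0, h1]
      · exact (main g' hg' g hg h.symm p hp h1).symm
    · exact main g hg g' hg' h p hp h0

end SidonAux
namespace PNTAux
open MeasureTheory Filter Topology Complex

/-- Fejer kernel. -/
noncomputable def K (v : ℝ) : ℝ := 2 * (1 - Real.cos v) / v ^ 2

lemma K_nonneg (v : ℝ) : 0 ≤ K v := by
  unfold K
  have := Real.cos_le_one v
  apply div_nonneg <;> nlinarith [sq_nonneg v]

lemma K_meas : Measurable K := by unfold K; fun_prop

lemma K_le (v : ℝ) : K v ≤ 5 * (1 + v ^ 2)⁻¹ := by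
  unfold K
  rcases eq_or_ne v 0 with rfl | hv
  · simp
  have hv2 : 0 < v ^ 2 := by positivity
  rw [← div_eq_mul_inv, div_le_div_iff₀ hv2 (by positivity)]
  have h1 := Real.one_sub_sq_div_two_le_cos (x := v)
  have h2 := Real.neg_one_le_cos v
  have h3 := Real.cos_le_one v
  nlinarith

lemma K_int : Integrable K := by
  refine Integrable.mono' (integrable_inv_one_add_sq.const_mul 5) K_meas.aestronglyMeasurable ?_
  filter_upwards with v
  rw [Real.norm_of_nonneg (K_nonneg v)]
  exact K_le v

lemma K_pos : 0 < ∫ v, K v := by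
  have h1 : (0:ℝ) < ∫ v in (1:ℝ)..2, K v := by
    apply intervalIntegral.intervalIntegral_pos_of_pos_on (K_int.intervalIntegrable) _ (by norm_num)
    intro v hv
    unfold K
    have : Real.cos v < 1 := by
      have := Real.cos_lt_cos_of_nonneg_of_le_pi (x := 0) (y := v) le_rfl
        (by linarith [hv.2, Real.pi_gt_three]) (by linarith [hv.1])
      simpa using this
    have h0 : 0 < v := by linarith [hv.1]
    apply div_pos <;> [linarith; positivity]
  rw [intervalIntegral.integral_of_le (by norm_num)] at h1
  exact h1.trans_le (setIntegral_le_integral K_int (by filter_upwards with v using K_nonneg v))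

lemma fejer {v : ℝ} (hv : v ≠ 0) :
    ∫ t in (-1:ℝ)..1, ((1 - |t| : ℝ) : ℂ) * cexp (I * t * v) = (K v : ℂ) := by
  have hv' : (v : ℂ) ≠ 0 := by exact_mod_cast hv
  have hIv : (I * v : ℂ) ≠ 0 := mul_ne_zero I_ne_zero hv'
  have hcont : Continuous (fun t : ℝ => ((1 - |t| : ℝ) : ℂ) * cexp (I * t * v)) := by fun_prop
  have hexp : ∀ t : ℝ, HasDerivAt (fun t : ℝ => cexp (I * t * v)) (cexp (I * t * v) * (I * v)) t := by
    intro t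
    have h1 : HasDerivAt (fun z : ℂ => cexp (I * z * v)) (cexp (I * t * v) * (I * v)) (t : ℂ) := by
      have := ((hasDerivAt_id (t : ℂ)).const_mul I).mul_const (v : ℂ)
      simpa using this.cexp
    exact h1.comp_ofReal
  have hid : ∀ t : ℝ, HasDerivAt (fun t : ℝ => (t : ℂ)) 1 t := fun t => ofRealCLM.hasDerivAt
  rw [← intervalIntegral.integral_add_adjacent_intervals (b := 0)
    (hcont.intervalIntegrable _ _) (hcont.intervalIntegrable _ _)]
  have e1 : ∫ t in (-1:ℝ)..0, ((1 - |t| : ℝ) : ℂ) * cexp (I * t * v) =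
      ∫ t in (-1:ℝ)..0, (1 + (t:ℂ)) * cexp (I * t * v) := by
    apply intervalIntegral.integral_congr
    intro t ht
    rw [Set.uIcc_of_le (by norm_num)] at ht
    simp only
    rw [abs_of_nonpos ht.2]; push_cast; ring
  have e2 : ∫ t in (0:ℝ)..1, ((1 - |t| : ℝ) : ℂ) * cexp (I * t * v) =
      ∫ t in (0:ℝ)..1, (1 - (t:ℂ)) * cexp (I * t * v) := by
    apply intervalIntegral.integral_congr
    intro t ht
    rw [Set.uIcc_of_le (by norm_num)] at ht
    simp only
    rw [abs_of_nonneg ht.1]; push_cast; ring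
  rw [e1, e2]
  rw [intervalIntegral.integral_eq_sub_of_hasDerivAt
    (f := fun t : ℝ => (1 + (t:ℂ)) * cexp (I * t * v) / (I * v) - cexp (I * t * v) / (I * v) ^ 2)]
  rotate_left
  · intro t _
    have := (((((hid t).const_add 1).mul (hexp t)).div_const (I * v)).sub
      ((hexp t).div_const ((I * v) ^ 2)))
    refine this.congr_deriv ?_
    field_simp
    ring
  · exact (by fun_prop : Continuous _).intervalIntegrable _ _
  rw [intervalIntegral.integral_eq_sub_of_hasDerivAt
    (f := fun t : ℝ => (1 - (t:ℂ)) * cexp (I * t * v) / (I * v) + cexp (I * t * v) / (I * v) ^ 2)]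
  rotate_left
  · intro t _
    have := (((((hid t).const_sub 1).mul (hexp t)).div_const (I * v)).add
      ((hexp t).div_const ((I * v) ^ 2)))
    refine this.congr_deriv ?_
    field_simp
    ring
  · exact (by fun_prop : Continuous _).intervalIntegrable _ _
  have hcos : (Real.cos v : ℂ) = (cexp (I * v) + cexp (-(I * v))) / 2 := by
    rw [ofReal_cos, Complex.cos]; congr 2 <;> ring_nf
  unfold K
  push_cast [hcos]
  simp only [mul_zero, zero_mul, mul_one, Complex.exp_zero]
  rw [show (I * -1 * v : ℂ) = -(I * v) by ring]
  have hI : (I * v : ℂ) ^ 2 = - (v:ℂ) ^ 2 := by rw [mul_pow, I_sq]; ring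
  rw [hI]
  field_simp
  ring

end PNTAux

namespace PNTAux
open MeasureTheory Filter Topology Complex

section wiener
variable {f : ℝ → ℝ} {C : ℝ} {G : ℂ → ℂ}

lemma int_h (hfm : Measurable f) (hC : ∀ u, |f u| ≤ C) (hf0 : ∀ u < 0, f u = 0)
    {σ : ℝ} (hσ : 0 < σ) : Integrable (fun u : ℝ => ((f u * Real.exp (-σ * u) : ℝ) : ℂ)) := by
  suffices hsf : Integrable (fun u : ℝ => f u * Real.exp (-σ * u)) from hsf.ofReal
  have h1 : IntegrableOn (fun u : ℝ => Real.exp (-σ * u)) (Set.Ici 0) := by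
    rw [integrableOn_Ici_iff_integrableOn_Ioi]; exact exp_neg_integrableOn_Ioi 0 hσ
  have h2 : IntegrableOn (fun u : ℝ => C * Real.exp (-σ * u)) (Set.Ici 0) := h1.const_mul C
  have h3 := (integrable_indicator_iff measurableSet_Ici).2 h2
  refine h3.mono' (by fun_prop) ?_
  filter_upwards with u
  by_cases hu : u < 0
  · simp [hf0 u hu, Set.indicator, not_le.2 hu]
  · rw [Set.indicator_of_mem (by simpa using hu), norm_mul, Real.norm_eq_abs, Real.norm_eq_abs,
      Real.abs_exp]
    gcongr
    exact hC u

lemma wiener_id (hfm : Measurable f) (hC : ∀ u, |f u| ≤ C) (hf0 : ∀ u < 0, f u = 0)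
    (hfG : ∀ s : ℂ, 0 < s.re → ∫ u : ℝ, (f u : ℂ) * cexp (-s * u) = G s)
    {l : ℝ} (hl : 0 < l) {σ : ℝ} (hσ : 0 < σ) (x : ℝ) :
    ((∫ v : ℝ, (f (x - v / l) * Real.exp (-σ * (x - v / l))) * K v : ℝ) : ℂ) =
      l * ∫ t in Set.Ioc (-1:ℝ) 1, ((1 - |t| : ℝ) : ℂ) * cexp (I * t * (l * x)) *
        G (σ + I * (l * t)) := by
  have hint := int_h hfm hC hf0 hσ
  set h : ℝ → ℝ := fun u => f u * Real.exp (-σ * u) with hh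
  have e1 : ∫ v : ℝ, (f (x - v / l) * Real.exp (-σ * (x - v / l))) * K v
      = l * ∫ u : ℝ, h u * K (l * (x - u)) := by
    rw [← integral_sub_left_eq_self (fun u => h u * K (l * (x - u))) volume x]
    have := Measure.integral_comp_mul_left (fun v => h (x - v / l) * K v) l
    rw [abs_of_pos (inv_pos.2 hl), smul_eq_mul] at this
    have h2 : ∀ y : ℝ, h (x - y) * K (l * (x - (x - y))) = h (x - l * y / l) * K (l * y) := by
      intro y; rw [mul_div_cancel_left₀ _ hl.ne']; congr 2; ring
    simp_rw [h2]
    rw [this, ← mul_assoc, mul_inv_cancel₀ hl.ne', one_mul]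
  rw [e1, ofReal_mul, ← integral_complex_ofReal]
  congr 1
  have e2 : ∫ u : ℝ, ((h u * K (l * (x - u)) : ℝ) : ℂ) =
      ∫ u : ℝ, ∫ t in Set.Ioc (-1:ℝ) 1,
        (h u : ℂ) * ((1 - |t| : ℝ) : ℂ) * cexp (I * t * (l * (x - u))) := by
    apply integral_congr_ae
    have : ∀ᵐ u : ℝ, u ≠ x := by
      simp [ae_iff]
    filter_upwards [this] with u hu
    have hne : l * (x - u) ≠ 0 := mul_ne_zero hl.ne' (sub_ne_zero.2 (Ne.symm hu))
    rw [ofReal_mul, ← fejer hne, intervalIntegral.integral_of_le (by norm_num),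
      ← integral_const_mul]
    congr 1; funext t; push_cast; ring
  rw [e2, integral_integral_swap]
  · apply integral_congr_ae
    filter_upwards with t
    have hs : 0 < (σ + I * (l * t) : ℂ).re := by simp [hσ]
    rw [← hfG _ hs, ← integral_const_mul]
    congr 1; funext u
    simp only [hh]
    push_cast
    have : cexp (I * t * (l * (x - u))) * cexp (-σ * u) =
      cexp (I * t * (l * x)) * cexp (-(σ + I * (l * t)) * u) := by
      rw [← Complex.exp_add, ← Complex.exp_add]; congr 1; ring
    linear_combination (f u : ℂ) * (1 - (|t| : ℝ) : ℂ) * this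
  · have hw : Integrable (fun t : ℝ => ((1 - |t| : ℝ) : ℂ)) (volume.restrict (Set.Ioc (-1:ℝ) 1)) :=
      ((by fun_prop : Continuous (fun t : ℝ => ((1 - |t| : ℝ) : ℂ))).integrableOn_Icc).mono_set
        Set.Ioc_subset_Icc_self
    have := hint.mul_prod hw
    refine Integrable.mul_bdd (c := 1) this ?_ ?_
    · exact (by fun_prop : Continuous (fun a : ℝ × ℝ =>
        cexp (I * a.2 * (l * (x - a.1))))).aestronglyMeasurable
    · filter_upwards with a
      rw [show I * a.2 * (l * (x - a.1)) = ((a.2 * (l * (x - a.1)) : ℝ) : ℂ) * I by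
        push_cast; ring]
      rw [norm_exp_ofReal_mul_I]

lemma wiener_id0 (hfm : Measurable f) (hC : ∀ u, |f u| ≤ C) (hf0 : ∀ u < 0, f u = 0)
    (hG : ContinuousOn G {s | 0 ≤ s.re})
    (hfG : ∀ s : ℂ, 0 < s.re → ∫ u : ℝ, (f u : ℂ) * cexp (-s * u) = G s)
    {l : ℝ} (hl : 0 < l) (x : ℝ) :
    ((∫ v : ℝ, f (x - v / l) * K v : ℝ) : ℂ) =
      l * ∫ t in Set.Ioc (-1:ℝ) 1, ((1 - |t| : ℝ) : ℂ) * cexp (I * t * (l * x)) *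
        G (I * (l * t)) := by
  have hC0 : 0 ≤ C := (abs_nonneg _).trans (hC 0)
  have L1 : Tendsto (fun σ : ℝ => ((∫ v : ℝ, (f (x - v / l) * Real.exp (-σ * (x - v / l))) * K v : ℝ) : ℂ))
      (𝓝[>] 0) (𝓝 ((∫ v : ℝ, f (x - v / l) * K v : ℝ) : ℂ)) := by
    refine (continuous_ofReal.tendsto _).comp ?_
    apply tendsto_integral_filter_of_dominated_convergence (fun v => C * K v)
    · filter_upwards with σ
      have := K_meas
      exact (by fun_prop : Measurable _).aestronglyMeasurable
    · filter_upwards [self_mem_nhdsWithin] with σ hσ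
      filter_upwards with v
      rw [norm_mul, Real.norm_of_nonneg (K_nonneg v)]
      gcongr
      · exact K_nonneg v
      rw [norm_mul, Real.norm_eq_abs, Real.norm_eq_abs, Real.abs_exp]
      by_cases hu : x - v / l < 0
      · rw [hf0 _ hu]; simpa using hC0
      · push Not at hu
        have : Real.exp (-σ * (x - v / l)) ≤ 1 := by
          rw [Real.exp_le_one_iff]
          have : (0:ℝ) < σ := hσ
          nlinarith
        calc _ ≤ C * 1 := by gcongr; exact hC _
          _ = C := mul_one C
    · exact K_int.const_mul C
    · filter_upwards with v
      have : Continuous (fun σ : ℝ => (f (x - v / l) * Real.exp (-σ * (x - v / l))) * K v) := by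
        fun_prop
      have := (this.tendsto 0).mono_left (nhdsWithin_le_nhds (s := Set.Ioi 0))
      simpa using this
  have hcompact : IsCompact (Set.Icc (0:ℝ) 1 ×ˢ Set.Icc (-1:ℝ) 1) := isCompact_Icc.prod isCompact_Icc
  have hGc : ContinuousOn (fun q : ℝ × ℝ => G (q.1 + I * (l * q.2)))
      (Set.Icc (0:ℝ) 1 ×ˢ Set.Icc (-1:ℝ) 1) := by
    apply hG.comp (by fun_prop : Continuous _).continuousOn
    rintro ⟨a, b⟩ h
    simpa using h.1.1
  obtain ⟨M, hM⟩ := hcompact.exists_bound_of_continuousOn hGc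
  have L2 : Tendsto (fun σ : ℝ => l * ∫ t in Set.Ioc (-1:ℝ) 1,
      ((1 - |t| : ℝ) : ℂ) * cexp (I * t * (l * x)) * G (σ + I * (l * t)))
      (𝓝[>] 0) (𝓝 (l * ∫ t in Set.Ioc (-1:ℝ) 1, ((1 - |t| : ℝ) : ℂ) * cexp (I * t * (l * x)) *
        G (I * (l * t)))) := by
    apply Tendsto.const_mul
    apply tendsto_integral_filter_of_dominated_convergence (fun v => M)
    · have : Set.Ioo (0:ℝ) 1 ∈ 𝓝[>] (0:ℝ) := Ioo_mem_nhdsGT (by norm_num)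
      filter_upwards [this] with σ hσ
      apply ContinuousOn.aestronglyMeasurable _ measurableSet_Ioc
      apply ContinuousOn.mul (by fun_prop : Continuous _).continuousOn
      apply hG.comp (by fun_prop : Continuous _).continuousOn
      intro t ht
      simpa using hσ.1.le
    · have : Set.Ioo (0:ℝ) 1 ∈ 𝓝[>] (0:ℝ) := Ioo_mem_nhdsGT (by norm_num)
      filter_upwards [this] with σ hσ
      filter_upwards [ae_restrict_mem measurableSet_Ioc] with t ht
      have h1 := hM (σ, t) ⟨⟨hσ.1.le, hσ.2.le⟩, ⟨ht.1.le, ht.2⟩⟩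
      rw [norm_mul, norm_mul, show I * t * (l * x) = ((t * (l * x) : ℝ) : ℂ) * I by
        push_cast; ring, norm_exp_ofReal_mul_I, mul_one, norm_real, Real.norm_eq_abs]
      have h2 : abs (1 - abs t) ≤ 1 := by
        have : |t| ≤ 1 := abs_le.2 ⟨ht.1.le, ht.2⟩
        rw [abs_le]; constructor <;> linarith [abs_nonneg t]
      calc _ ≤ 1 * M := by gcongr
        _ = M := one_mul M
    · exact integrable_const M
    · filter_upwards [ae_restrict_mem measurableSet_Ioc] with t ht
      apply Tendsto.const_mul
      have h0 : ContinuousWithinAt G {s | 0 ≤ s.re} (I * (l * t)) := hG _ (by simp)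
      apply h0.tendsto.comp
      rw [tendsto_nhdsWithin_iff]
      constructor
      · have : Continuous (fun σ : ℝ => (σ + I * (l * t) : ℂ)) := by fun_prop
        have := (this.tendsto 0).mono_left (nhdsWithin_le_nhds (s := Set.Ioi 0))
        simpa using this
      · filter_upwards [self_mem_nhdsWithin] with σ hσ
        have : (0:ℝ) < σ := hσ
        simpa using this.le
  refine tendsto_nhds_unique (L1.congr' ?_) L2
  filter_upwards [self_mem_nhdsWithin] with σ hσ
  exact wiener_id hfm hC hf0 hfG hl hσ x

lemma wiener_key (hfm : Measurable f) (hC : ∀ u, |f u| ≤ C) (hf0 : ∀ u < 0, f u = 0)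
    (hG : ContinuousOn G {s | 0 ≤ s.re})
    (hfG : ∀ s : ℂ, 0 < s.re → ∫ u : ℝ, (f u : ℂ) * cexp (-s * u) = G s)
    {l : ℝ} (hl : 0 < l) :
    Tendsto (fun x : ℝ => ∫ v : ℝ, f (x - v / l) * K v) atTop (𝓝 0) := by
  have hR := Real.tendsto_integral_exp_smul_cocompact
    (Set.indicator (Set.Ioc (-1:ℝ) 1) (fun t : ℝ => ((1 - |t| : ℝ) : ℂ) * G (I * (l * t))))
  have hT : Tendsto (fun x : ℝ => -(l * x / (2 * Real.pi))) atTop (cocompact ℝ) := by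
    refine Tendsto.mono_right ?_ atBot_le_cocompact
    apply tendsto_neg_atTop_atBot.comp
    apply Tendsto.atTop_div_const (by positivity)
    exact tendsto_id.const_mul_atTop hl
  have h1 := ((hR.comp hT).const_mul (l : ℂ))
  rw [mul_zero] at h1
  have h2 : Tendsto (fun x : ℝ => ((∫ v : ℝ, f (x - v / l) * K v : ℝ) : ℂ)) atTop (𝓝 0) := by
    refine h1.congr fun x => ?_
    rw [wiener_id0 hfm hC hf0 hG hfG hl x]
    congr 1
    simp only [Function.comp]
    rw [← integral_indicator measurableSet_Ioc]
    congr 1; funext t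
    by_cases ht : t ∈ Set.Ioc (-1:ℝ) 1
    · rw [Set.indicator_of_mem ht, Set.indicator_of_mem ht, Circle.smul_def, Real.fourierChar_apply,
        smul_eq_mul]
      have : cexp (I * t * (l * x)) =
          cexp (((2 * Real.pi * -(t * -(l * x / (2 * Real.pi))) : ℝ) : ℂ) * I) := by
        congr 1; push_cast
        have : (Real.pi : ℂ) ≠ 0 := by exact_mod_cast Real.pi_ne_zero
        field_simp
      rw [this]; ring
    · rw [Set.indicator_of_notMem ht, Set.indicator_of_notMem ht, smul_zero]
  have := (continuous_re.tendsto _).comp h2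
  simpa [Function.comp_def] using this

end wiener
end PNTAux

namespace PNTAux
open MeasureTheory Filter Topology Complex

noncomputable def FF (u : ℝ) : ℝ := Chebyshev.psi (Real.exp u) / Real.exp u

lemma FF_nonneg (u : ℝ) : 0 ≤ FF u := div_nonneg (Chebyshev.psi_nonneg _) (Real.exp_pos _).le

lemma FF_neg {u : ℝ} (hu : u < 0) : FF u = 0 := by
  unfold FF
  rw [Chebyshev.psi_eq_zero_of_le_one (by simpa using hu.le), zero_div]

lemma FF_le (u : ℝ) : FF u ≤ Real.log 4 + 4 := by
  unfold FF
  rw [div_le_iff₀ (Real.exp_pos _)]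
  exact Chebyshev.psi_le_const_mul_self (Real.exp_pos _).le

lemma FF_meas : Measurable FF :=
  (Chebyshev.psi_mono.measurable.comp Real.measurable_exp).div Real.measurable_exp

lemma FF_mono {u v : ℝ} (h : u ≤ v) : FF u * Real.exp (u - v) ≤ FF v := by
  unfold FF
  rw [Real.exp_sub, div_mul_div_comm, mul_comm (Real.exp u) (Real.exp v),
    mul_div_mul_right _ _ (Real.exp_pos _).ne']
  gcongr

noncomputable def ff (u : ℝ) : ℝ := if u < 0 then 0 else FF u - 1

lemma ff_meas : Measurable ff :=
  Measurable.ite measurableSet_Iio measurable_const (FF_meas.sub_const 1)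

lemma ff_bdd (u : ℝ) : |ff u| ≤ Real.log 4 + 4 := by
  have h4 : 0 < Real.log 4 := Real.log_pos (by norm_num)
  unfold ff
  split_ifs with h
  · simp; linarith
  · rw [abs_le]; constructor <;> linarith [FF_nonneg u, FF_le u]

lemma exp_image : Real.exp '' Set.Ioi 0 = Set.Ioi 1 := by
  ext y
  constructor
  · rintro ⟨x, hx, rfl⟩
    exact Real.one_lt_exp_iff.2 hx
  · intro hy
    have hy : (1:ℝ) < y := hy
    exact ⟨Real.log y, Real.log_pos hy, Real.exp_log (by linarith)⟩

noncomputable def Aux : ℂ → ℂ := ArithmeticFunction.vonMangoldt.LFunctionResidueClassAux (1 : ZMod 1)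

noncomputable def GG (s : ℂ) : ℂ := (Aux (1 + s) - 1) / (1 + s)

lemma GG_cont : ContinuousOn GG {s | 0 ≤ s.re} := by
  unfold GG
  apply ContinuousOn.div
  · apply ContinuousOn.sub _ continuousOn_const
    apply (ArithmeticFunction.vonMangoldt.continuousOn_LFunctionResidueClassAux (1 : ZMod 1)).comp
      (by fun_prop : Continuous (fun s : ℂ => 1 + s)).continuousOn
    intro s hs
    have : 0 ≤ s.re := hs
    simpa using this
  · fun_prop
  · intro s hs h
    have h1 : 0 ≤ s.re := hs
    have := congrArg Complex.re h
    simp at this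
    linarith

lemma Aux_eq {s : ℂ} (hs : 1 < s.re) :
    LSeries (fun n => (ArithmeticFunction.vonMangoldt n : ℂ)) s = Aux s + 1 / (s - 1) := by
  have := ArithmeticFunction.vonMangoldt.eqOn_LFunctionResidueClassAux (q := 1) (a := 1) isUnit_one hs
  unfold Aux
  rw [this]
  have h2 : (fun n => ((ArithmeticFunction.vonMangoldt.residueClass (1 : ZMod 1) n : ℝ) : ℂ)) =
    (fun n => (ArithmeticFunction.vonMangoldt n : ℂ)) := by
    funext n
    simp [ArithmeticFunction.vonMangoldt.residueClass, Subsingleton.elim _ (1 : ZMod 1)]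
  simp only [h2]
  simp

lemma psi_int {s : ℂ} (hs : 1 < s.re) :
    LSeries (fun n => (ArithmeticFunction.vonMangoldt n : ℂ)) s =
      s * ∫ u in Set.Ioi (0:ℝ), (FF u : ℂ) * cexp (-(s - 1) * u) := by
  have h := LSeries_eq_mul_integral_of_nonneg (fun n => ArithmeticFunction.vonMangoldt n)
    zero_le_one hs ?_ (fun n => ArithmeticFunction.vonMangoldt_nonneg)
  · rw [h]
    congr 1
    rw [← exp_image, integral_image_eq_integral_abs_deriv_smul measurableSet_Ioi
      (fun x _ => (Real.hasDerivAt_exp x).hasDerivWithinAt) Real.exp_injective.injOn]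
    congr 1; funext u
    have h1 : (∑ k ∈ Finset.Icc 1 ⌊Real.exp u⌋₊, ((ArithmeticFunction.vonMangoldt k : ℝ) : ℂ)) =
        ((Chebyshev.psi (Real.exp u) : ℝ) : ℂ) := by
      rw [Chebyshev.psi, ofReal_sum]; rfl
    rw [h1, Real.abs_exp, real_smul]
    have hne : cexp u ≠ 0 := Complex.exp_ne_zero _
    have h2 : ((Real.exp u : ℝ) : ℂ) ^ (-(s + 1)) = cexp (-(s+1) * u) := by
      rw [cpow_def_of_ne_zero (by simp), ← ofReal_log (Real.exp_pos u).le, Real.log_exp]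
      congr 1; ring
    rw [h2, FF]
    push_cast
    have h3 : cexp (-(s-1) * u) = cexp u * cexp u * cexp (-(s+1) * u) := by
      rw [← Complex.exp_add, ← Complex.exp_add]; congr 1; ring
    rw [h3]
    field_simp
  · apply Asymptotics.IsBigO.of_bound (Real.log 4 + 4)
    filter_upwards with n
    have := Chebyshev.psi_le_const_mul_self (x := n) (by positivity)
    have h0 := Chebyshev.psi_nonneg n
    have e : Chebyshev.psi n = ∑ k ∈ Finset.Icc 1 n, ArithmeticFunction.vonMangoldt k := by
      rw [Chebyshev.psi, Nat.floor_natCast]; rfl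
    rw [← e, Real.norm_of_nonneg h0, Real.rpow_one, Real.norm_of_nonneg (by positivity)]
    exact this

lemma exp_intOn {s : ℂ} (hs : 0 < s.re) :
    IntegrableOn (fun u : ℝ => cexp (-s * u)) (Set.Ioi 0) := 
  integrableOn_exp_mul_complex_Ioi (by simpa using hs) 0

lemma ff_laplace {s : ℂ} (hs : 0 < s.re) : ∫ u : ℝ, (ff u : ℂ) * cexp (-s * u) = GG s := by
  have e1 : ∫ u : ℝ, (ff u : ℂ) * cexp (-s * u) =
      ∫ u in Set.Ioi (0:ℝ), ((FF u : ℂ) * cexp (-s * u) - cexp (-s * u)) := by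
    rw [← integral_Ici_eq_integral_Ioi, ← integral_indicator measurableSet_Ici]
    congr 1; funext u
    by_cases hu : u < 0
    · rw [Set.indicator_of_notMem (by simpa using hu)]; simp [ff, hu]
    · rw [Set.indicator_of_mem (by simpa using hu)]; simp [ff, hu]; ring
  rw [e1, integral_sub _ (exp_intOn hs)]
  · have hL := psi_int (s := 1 + s) (by simpa using hs)
    rw [Aux_eq (by simpa using hs)] at hL
    have h0 : s ≠ 0 := by rintro rfl; simp at hs
    have h1 : 1 + s ≠ 0 := by
      intro h
      have := congrArg Complex.re h
      simp at this
      linarith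
    have e2 : ∫ u in Set.Ioi (0:ℝ), cexp (-s * u) = 1 / s := by
      rw [integral_exp_mul_complex_Ioi (by simpa using hs) 0]
      simp
    rw [e2]
    simp only [add_sub_cancel_left] at hL
    rw [GG]
    field_simp
    field_simp at hL
    linear_combination -hL
  · refine Integrable.bdd_mul (c := Real.log 4 + 4) (exp_intOn hs) ?_ ?_
    · exact (measurable_ofReal.comp FF_meas).aestronglyMeasurable
    · filter_upwards with u
      rw [norm_real, Real.norm_of_nonneg (FF_nonneg u)]
      exact FF_le u

lemma ff_key {l : ℝ} (hl : 0 < l) :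
    Tendsto (fun x : ℝ => ∫ v : ℝ, ff (x - v / l) * K v) atTop (𝓝 0) :=
  wiener_key ff_meas ff_bdd (fun u hu => by simp [ff, hu]) GG_cont (fun s hs => ff_laplace hs) hl

lemma FF_key {l : ℝ} (hl : 0 < l) :
    Tendsto (fun x : ℝ => ∫ v : ℝ, FF (x - v / l) * K v) atTop (𝓝 (∫ v, K v)) := by
  have h2 : Tendsto (fun x : ℝ => ∫ v : ℝ, (if x - v / l < 0 then 0 else 1) * K v) atTop
      (𝓝 (∫ v, K v)) := by
    have hm : ∀ x : ℝ, Measurable (fun v : ℝ => (if x - v / l < 0 then (0:ℝ) else 1)) := fun x =>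
      Measurable.ite (measurableSet_lt (by fun_prop) (by fun_prop)) measurable_const measurable_const
    apply tendsto_integral_filter_of_dominated_convergence K
    · filter_upwards with x
      exact ((hm x).mul K_meas).aestronglyMeasurable
    · filter_upwards with x
      filter_upwards with v
      split_ifs
      · simp [K_nonneg v]
      · simp [abs_of_nonneg (K_nonneg v)]
    · exact K_int
    · filter_upwards with v
      apply tendsto_const_nhds.congr'
      filter_upwards [eventually_ge_atTop (v / l)] with x hx
      rw [if_neg (by linarith), one_mul]
  have h3 := (ff_key hl).add h2
  rw [zero_add] at h3
  refine h3.congr fun x => ?_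
  have hm : Measurable (fun v : ℝ => x - v / l) := by fun_prop
  rw [← integral_add]
  · congr 1; funext v
    unfold ff
    split_ifs with h
    · rw [FF_neg h]; ring
    · ring
  · exact K_int.bdd_mul (c := Real.log 4 + 4) (ff_meas.comp hm).aestronglyMeasurable
      (Eventually.of_forall fun v => ff_bdd _)
  · refine K_int.bdd_mul (c := 1) (Measurable.aestronglyMeasurable (Measurable.ite (measurableSet_lt (by fun_prop) (by fun_prop)) measurable_const measurable_const)) 
      (Eventually.of_forall fun v => by split_ifs <;> simp)

end PNTAux

namespace PNTAux
open MeasureTheory Filter Topology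

lemma exists_R {δ : ℝ} (hδ : 0 < δ) :
    ∃ R : ℝ, 0 < R ∧ (1 - δ) * (∫ v, K v) ≤ ∫ v in Set.Icc (-R) R, K v := by
  have hc : AECover (volume : Measure ℝ) atTop (fun R : ℝ => Set.Icc (-R) R) :=
    aecover_Icc tendsto_neg_atTop_atBot tendsto_id
  have ht := hc.integral_tendsto_of_countably_generated K_int
  have hlt : (1 - δ) * (∫ v, K v) < ∫ v, K v := by nlinarith [K_pos]
  have := (ht.eventually (lt_mem_nhds hlt)).and (eventually_gt_atTop 0)
  obtain ⟨R, h1, h2⟩ := this.exists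
  exact ⟨R, h2, h1.le⟩

lemma FFK_int (x l : ℝ) : Integrable (fun v => FF (x - v / l) * K v) := by
  have hm : Measurable (fun v : ℝ => x - v / l) := by fun_prop
  exact K_int.bdd_mul (c := Real.log 4 + 4) (FF_meas.comp hm).aestronglyMeasurable
      (Eventually.of_forall fun v => by
        rw [Real.norm_of_nonneg (FF_nonneg _)]; exact FF_le _)

lemma v_bd {δ R v : ℝ} (hδ : 0 < δ) (hR : 0 < R) (hv : v ∈ Set.Icc (-R) R) :
    -δ ≤ v / (R / δ) ∧ v / (R / δ) ≤ δ := by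
  have e : v / (R / δ) = (v / R) * δ := by field_simp
  have h1 : v / R ≤ 1 := (div_le_one hR).2 hv.2
  have h2 : -1 ≤ v / R := by rw [le_div_iff₀ hR]; linarith [hv.1]
  rw [e]; constructor <;> nlinarith

lemma FF_upper {δ : ℝ} (hδ : 0 < δ) (hδ1 : δ < 1) :
    ∀ᶠ x in atTop, FF x ≤ Real.exp (2 * δ) * (1 + δ) / (1 - δ) := by
  obtain ⟨R, hR, hJ⟩ := exists_R hδ
  have hI := K_pos
  have hk := FF_key (div_pos hR hδ)
  have h1 := hk.eventually (gt_mem_nhds (show ∫ v, K v < (1 + δ) * ∫ v, K v by nlinarith))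
  have h2 := (tendsto_atTop_add_const_right atTop δ tendsto_id).eventually h1
  filter_upwards [h2] with x hx
  simp only [id] at hx
  have h3 : FF x * Real.exp (-(2 * δ)) * ∫ v in Set.Icc (-R) R, K v ≤
      ∫ v, FF (x + δ - v / (R / δ)) * K v := by
    rw [← integral_const_mul]
    refine le_trans (setIntegral_mono_on (K_int.integrableOn.const_mul _)
      (FFK_int (x + δ) (R / δ)).integrableOn measurableSet_Icc ?_)
      (setIntegral_le_integral (FFK_int (x + δ) (R / δ)) ?_)
    · intro v hv
      obtain ⟨b1, b2⟩ := v_bd hδ hR hv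
      apply mul_le_mul_of_nonneg_right _ (K_nonneg v)
      refine le_trans ?_ (FF_mono (show x ≤ x + δ - v / (R / δ) by linarith))
      apply mul_le_mul_of_nonneg_left _ (FF_nonneg x)
      apply Real.exp_le_exp.2; linarith
    · exact Eventually.of_forall fun v => mul_nonneg (FF_nonneg _) (K_nonneg v)
  have h4 : FF x * Real.exp (-(2 * δ)) * ((1 - δ) * ∫ v, K v) < (1 + δ) * ∫ v, K v :=
    lt_of_le_of_lt (le_trans (mul_le_mul_of_nonneg_left hJ
      (mul_nonneg (FF_nonneg x) (Real.exp_pos _).le)) h3) hx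
  have h5 : FF x * Real.exp (-(2 * δ)) * (1 - δ) ≤ (1 + δ) := by
    by_contra hcon
    push Not at hcon
    nlinarith
  rw [le_div_iff₀ (by linarith)]
  have e : Real.exp (2 * δ) * Real.exp (-(2 * δ)) = 1 := by rw [← Real.exp_add]; simp
  calc FF x * (1 - δ) = Real.exp (2 * δ) * (FF x * Real.exp (-(2 * δ)) * (1 - δ)) := by
        linear_combination -(FF x * (1 - δ)) * e
    _ ≤ _ := by gcongr

lemma FF_lower {δ : ℝ} (hδ : 0 < δ) :
    ∀ᶠ x in atTop, Real.exp (-(2 * δ)) * (1 - δ - (Real.log 4 + 4) * δ) ≤ FF x := by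
  obtain ⟨R, hR, hJ⟩ := exists_R hδ
  have hI := K_pos
  have hC : 0 < Real.log 4 + 4 := by have := Real.log_pos (show (1:ℝ) < 4 by norm_num); linarith
  have hk := FF_key (div_pos hR hδ)
  have h1 := hk.eventually (lt_mem_nhds (show (1 - δ) * ∫ v, K v < ∫ v, K v by nlinarith))
  have h2 := (tendsto_atTop_add_const_right atTop (-δ) tendsto_id).eventually h1
  filter_upwards [h2] with x hx
  simp only [id] at hx
  have hJI : ∫ v in Set.Icc (-R) R, K v ≤ ∫ v, K v :=
    setIntegral_le_integral K_int (Eventually.of_forall K_nonneg)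
  have h3 : ∫ v, FF (x + -δ - v / (R / δ)) * K v ≤
      FF x * Real.exp (2 * δ) * (∫ v in Set.Icc (-R) R, K v) +
      (Real.log 4 + 4) * ((∫ v, K v) - ∫ v in Set.Icc (-R) R, K v) := by
    have hsplit := integral_add_compl (s := Set.Icc (-R) R) measurableSet_Icc K_int
    rw [← hsplit, add_sub_cancel_left,
      ← integral_add_compl (s := Set.Icc (-R) R) measurableSet_Icc (FFK_int (x + -δ) (R / δ)),
      ← integral_const_mul, ← integral_const_mul]
    apply add_le_add
    · refine setIntegral_mono_on (FFK_int _ _).integrableOn (K_int.integrableOn.const_mul _)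
        measurableSet_Icc ?_
      intro v hv
      obtain ⟨b1, b2⟩ := v_bd hδ hR hv
      apply mul_le_mul_of_nonneg_right _ (K_nonneg v)
      have hm := FF_mono (show x + -δ - v / (R / δ) ≤ x by linarith)
      have hm2 : FF (x + -δ - v / (R / δ)) * Real.exp (-(2 * δ)) ≤ FF x :=
        le_trans (mul_le_mul_of_nonneg_left (Real.exp_le_exp.2 (by linarith)) (FF_nonneg _)) hm
      have e : Real.exp (2 * δ) * Real.exp (-(2 * δ)) = 1 := by rw [← Real.exp_add]; simp
      calc FF (x + -δ - v / (R / δ)) =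
          (FF (x + -δ - v / (R / δ)) * Real.exp (-(2 * δ))) * Real.exp (2 * δ) := by
            linear_combination -(FF (x + -δ - v / (R / δ))) * e
        _ ≤ _ := by gcongr
    · refine setIntegral_mono_on (FFK_int _ _).integrableOn (K_int.integrableOn.const_mul _)
        measurableSet_Icc.compl ?_
      intro v hv
      exact mul_le_mul_of_nonneg_right (FF_le _) (K_nonneg v)
  have h4 : (1 - δ) * (∫ v, K v) ≤ FF x * Real.exp (2 * δ) * (∫ v, K v) +
      (Real.log 4 + 4) * (δ * ∫ v, K v) := by
    refine hx.le.trans (h3.trans ?_)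
    apply add_le_add
    · exact mul_le_mul_of_nonneg_left hJI (mul_nonneg (FF_nonneg x) (Real.exp_pos _).le)
    · apply mul_le_mul_of_nonneg_left _ hC.le
      linarith
  have h5 : 1 - δ - (Real.log 4 + 4) * δ ≤ FF x * Real.exp (2 * δ) := by
    by_contra hcon
    push Not at hcon
    nlinarith
  have e : Real.exp (2 * δ) * Real.exp (-(2 * δ)) = 1 := by rw [← Real.exp_add]; simp
  calc _ ≤ Real.exp (-(2 * δ)) * (FF x * Real.exp (2 * δ)) := by gcongr
    _ = FF x := by linear_combination (FF x) * e

lemma FF_tendsto : Tendsto FF atTop (𝓝 1) := by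
  rw [tendsto_order]
  constructor
  · intro a ha
    have hc : Tendsto (fun δ : ℝ => Real.exp (-(2 * δ)) * (1 - δ - (Real.log 4 + 4) * δ))
        (𝓝[>] 0) (𝓝 1) := by
      have : Continuous (fun δ : ℝ => Real.exp (-(2 * δ)) * (1 - δ - (Real.log 4 + 4) * δ)) := by
        fun_prop
      have := (this.tendsto 0).mono_left (nhdsWithin_le_nhds (s := Set.Ioi 0))
      simpa using this
    obtain ⟨δ, h1, h2⟩ := ((hc.eventually (lt_mem_nhds ha)).and self_mem_nhdsWithin).exists
    filter_upwards [FF_lower (δ := δ) h2] with x hx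
    exact lt_of_lt_of_le h1 hx
  · intro a ha
    have hc : Tendsto (fun δ : ℝ => Real.exp (2 * δ) * (1 + δ) / (1 - δ))
        (𝓝[>] 0) (𝓝 1) := by
      have : ContinuousAt (fun δ : ℝ => Real.exp (2 * δ) * (1 + δ) / (1 - δ)) 0 := by
        apply ContinuousAt.div (by fun_prop) (by fun_prop) (by norm_num)
      have := this.tendsto.mono_left (nhdsWithin_le_nhds (s := Set.Ioi 0))
      simpa using this
    have hlt : Set.Ioo (0:ℝ) 1 ∈ 𝓝[>] (0:ℝ) := Ioo_mem_nhdsGT (by norm_num)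
    obtain ⟨δ, h1, h2⟩ := ((hc.eventually (gt_mem_nhds ha)).and hlt).exists
    filter_upwards [FF_upper (δ := δ) h2.1 h2.2] with x hx
    exact lt_of_le_of_lt hx h1

lemma psi_tendsto : Tendsto (fun x => Chebyshev.psi x / x) atTop (𝓝 1) := by
  have := FF_tendsto.comp Real.tendsto_log_atTop
  refine this.congr' ?_
  filter_upwards [eventually_gt_atTop 0] with x hx
  simp [FF, Real.exp_log hx]

end PNTAux

namespace PNTAux
open Filter Topology Asymptotics

lemma pi_pos {n : ℕ} (hn : 2 ≤ n) : 0 < Nat.primeCounting n := by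
  rw [Nat.pos_iff_ne_zero, Ne, Nat.primeCounting_eq_zero_iff]; omega

lemma theta_tendsto : Tendsto (fun x => Chebyshev.theta x / x) atTop (𝓝 1) := by
  have h1 : (Chebyshev.psi - Chebyshev.theta) =o[atTop] (fun x : ℝ => x) := by
    refine Chebyshev.isBigO_psi_sub_theta_sqrt.trans_isLittleO ?_
    refine isLittleO_iff_tendsto' (by
      filter_upwards [eventually_gt_atTop 0] with x hx h
      linarith) |>.mpr ?_
    refine Tendsto.congr' (f₁ := fun x ↦ (√x)⁻¹) ?_ Real.tendsto_sqrt_atTop.inv_tendsto_atTop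
    filter_upwards [eventually_gt_atTop 0] with x hx
    rw [Real.sqrt_div_self']; simp
  have h2 := psi_tendsto.sub h1.tendsto_div_nhds_zero
  rw [sub_zero] at h2
  refine h2.congr fun x => ?_
  simp only [Pi.sub_apply]
  ring

noncomputable def Q (x : ℝ) : ℝ := (Nat.primeCounting ⌊x⌋₊ : ℝ) * Real.log x / x

lemma Q_tendsto : Tendsto Q atTop (𝓝 1) := by
  have h1 := Chebyshev.primeCounting_sub_theta_div_log_isBigO
  have h2 : (fun x : ℝ => x / Real.log x ^ 2) =o[atTop] (fun x : ℝ => x / Real.log x) := by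
    refine isLittleO_iff_tendsto' (by
      filter_upwards [eventually_gt_atTop 1] with x hx h
      have := Real.log_pos hx
      have : 0 < x / Real.log x := by positivity
      linarith) |>.mpr ?_
    refine Tendsto.congr' (f₁ := fun x ↦ (Real.log x)⁻¹) ?_ Real.tendsto_log_atTop.inv_tendsto_atTop
    filter_upwards [eventually_gt_atTop 1] with x hx
    have := Real.log_pos hx
    field
  have h3 := (h1.trans_isLittleO h2).tendsto_div_nhds_zero
  have h4 := theta_tendsto.add h3
  rw [add_zero] at h4
  refine h4.congr' ?_
  filter_upwards [eventually_gt_atTop 1] with x hx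
  have := Real.log_pos hx
  unfold Q
  field_simp
  ring

noncomputable def H (x : ℝ) : ℝ := (Nat.primeCounting ⌊x⌋₊ : ℝ) * (2 + Real.log x) / x

lemma H_tendsto : Tendsto H atTop (𝓝 1) := by
  have h1 : Tendsto (fun x => Q x * (2 * (Real.log x)⁻¹ + 1)) atTop (𝓝 (1 * (2 * 0 + 1))) :=
    Q_tendsto.mul (((Real.tendsto_log_atTop.inv_tendsto_atTop).const_mul 2).add_const 1)
  have e : (1:ℝ) * (2 * 0 + 1) = 1 := by norm_num
  rw [e] at h1
  refine h1.congr' ?_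
  filter_upwards [eventually_gt_atTop 1] with x hx
  have := Real.log_pos hx
  unfold Q H
  field_simp

lemma H_bdd : ∃ B : ℝ, 0 < B ∧ ∀ x : ℝ, 1 ≤ x → H x ≤ B := by
  have := H_tendsto.eventually (gt_mem_nhds (show (1:ℝ) < 2 by norm_num))
  obtain ⟨X, hX⟩ := eventually_atTop.1 this
  set Y := max X 1
  have hY : 1 ≤ Y := le_max_right _ _
  have hlY := Real.log_nonneg hY
  refine ⟨2 + (Nat.primeCounting ⌊Y⌋₊ : ℝ) * (2 + Real.log Y), by positivity, fun x hx => ?_⟩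
  by_cases h : X ≤ x
  · have := hX x h
    have : 0 ≤ (Nat.primeCounting ⌊Y⌋₊ : ℝ) * (2 + Real.log Y) := by positivity
    linarith
  · have hxY : x ≤ Y := (not_le.1 h).le.trans (le_max_left _ _)
    have hlx := Real.log_nonneg hx
    have h1 : H x ≤ (Nat.primeCounting ⌊x⌋₊ : ℝ) * (2 + Real.log x) :=
      div_le_self (by positivity) hx
    have h2 : (Nat.primeCounting ⌊x⌋₊ : ℝ) ≤ Nat.primeCounting ⌊Y⌋₊ := by
      exact_mod_cast Nat.monotone_primeCounting (Nat.floor_mono hxY)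
    have h3 : Real.log x ≤ Real.log Y := Real.log_le_log (by linarith) hxY
    have h4 : (Nat.primeCounting ⌊x⌋₊ : ℝ) * (2 + Real.log x) ≤
      (Nat.primeCounting ⌊Y⌋₊ : ℝ) * (2 + Real.log Y) := by gcongr
    linarith

lemma sqrt_mono {x y : ℝ} (hx : 1 ≤ x) (hxy : x ≤ y) :
    √x * (2 + Real.log y) ≤ √y * (2 + Real.log x) := by
  have hsx : 0 < √x := Real.sqrt_pos.2 (by linarith)
  have hsy : 0 < √y := Real.sqrt_pos.2 (by linarith)
  have hs : √x ≤ √y := Real.sqrt_le_sqrt hxy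
  have hl : Real.log (√y / √x) ≤ √y / √x - 1 := Real.log_le_sub_one_of_pos (by positivity)
  rw [Real.log_div hsy.ne' hsx.ne', Real.log_sqrt (by linarith), Real.log_sqrt (by linarith)] at hl
  have h0 := Real.log_nonneg hx
  have h2 : √x * (√y / √x) = √y := by field_simp
  nlinarith

lemma ratio_bound : ∃ C : ℝ, ∀ᶠ n : ℕ in atTop, ∀ i : ℕ,
    (Nat.primeCounting (n / (i + 1)) : ℝ) / Nat.primeCounting n ≤ C * (√((i:ℝ) + 1))⁻¹ := by
  obtain ⟨B, hB, hBx⟩ := H_bdd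
  refine ⟨2 * B, ?_⟩
  have := (H_tendsto.comp tendsto_natCast_atTop_atTop).eventually
    (lt_mem_nhds (show (1/2:ℝ) < 1 by norm_num))
  filter_upwards [this, eventually_ge_atTop 2] with n hn hn2 i
  simp only [Function.comp, H, Nat.floor_natCast] at hn
  have hn1 : (1:ℝ) ≤ n := by exact_mod_cast (by omega : 1 ≤ n)
  have hpi : (0:ℝ) < Nat.primeCounting n := by
    exact_mod_cast pi_pos hn2
  by_cases hi : i + 1 ≤ n
  · set x : ℝ := (n:ℝ) / ((i:ℝ) + 1) with hx
    have hx1 : 1 ≤ x := by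
      rw [hx, one_le_div (by positivity)]; exact_mod_cast hi
    have hxn : x ≤ n := div_le_self (by positivity) (by linarith [Nat.cast_nonneg (α := ℝ) i])
    have hfl : ⌊x⌋₊ = n / (i + 1) := by
      have := Nat.floor_div_natCast (n:ℝ) (i + 1)
      push_cast at this
      rw [hx, this, Nat.floor_natCast]
    have h1 := hBx x hx1
    unfold H at h1
    rw [hfl] at h1
    have hlx := Real.log_nonneg hx1
    have hln := Real.log_nonneg hn1
    rw [div_le_iff₀ (by linarith)] at h1
    rw [lt_div_iff₀ (by linarith)] at hn
    have h3 := sqrt_mono hx1 hxn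
    have hsx : √x * √x = x := Real.mul_self_sqrt (by linarith)
    have hsn : √(n:ℝ) * √(n:ℝ) = n := Real.mul_self_sqrt (by linarith)
    have hsx0 : 0 < √x := Real.sqrt_pos.2 (by linarith)
    have hsn0 : 0 < √(n:ℝ) := Real.sqrt_pos.2 (by linarith)
    have hq : (√((i:ℝ) + 1))⁻¹ = √x / √(n:ℝ) := by
      rw [hx, Real.sqrt_div (by positivity)]; field_simp
    rw [hq, div_le_iff₀ hpi]
    set a : ℝ := (Nat.primeCounting (n / (i + 1)) : ℝ)
    set b : ℝ := (Nat.primeCounting n : ℝ)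
    have h5 : a * (2 + Real.log n) ≤ B * (√x * √(n:ℝ)) := by
      have : √x * (a * (2 + Real.log n)) ≤ √x * (B * (√x * √(n:ℝ))) := by
        calc √x * (a * (2 + Real.log n)) = a * (√x * (2 + Real.log n)) := by ring
          _ ≤ a * (√n * (2 + Real.log x)) := by gcongr
          _ = √n * (a * (2 + Real.log x)) := by ring
          _ ≤ √n * (B * x) := by gcongr
          _ = _ := by linear_combination (-√(n:ℝ) * B) * hsx
      exact le_of_mul_le_mul_left this hsx0
    have h6 : a * (2 + Real.log n) ≤ (2 * B * (√x / √n) * b) * (2 + Real.log n) := by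
      calc _ ≤ B * (√x * √(n:ℝ)) := h5
        _ = 2 * B * (√x / √n) * (1 / 2 * n) := by
          have : √x / √(n:ℝ) * n = √x * √n := by
            nth_rw 2 [← hsn]; field_simp
          linear_combination -B * this
        _ ≤ 2 * B * (√x / √n) * (b * (2 + Real.log n)) := by gcongr
        _ = _ := by ring
    exact le_of_mul_le_mul_right h6 (by linarith)
  · rw [Nat.div_eq_of_lt (by omega)]
    simp
    positivity

lemma ratio_tendsto (i : ℕ) : Tendsto (fun n : ℕ =>
    (Nat.primeCounting (n / (i + 1)) : ℝ) / Nat.primeCounting n) atTop (𝓝 (1 / ((i:ℝ) + 1))) := by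
  have hc : Tendsto (fun n : ℕ => (n : ℝ)) atTop atTop := tendsto_natCast_atTop_atTop
  have hd : Tendsto (fun n : ℕ => (n : ℝ) / ((i:ℝ) + 1)) atTop atTop :=
    hc.atTop_div_const (by positivity)
  have h1 := Q_tendsto.comp hc
  have h2 := Q_tendsto.comp hd
  have hl : Tendsto (fun n : ℕ => 1 - Real.log ((i:ℝ) + 1) * (Real.log n)⁻¹) atTop (𝓝 (1 - Real.log ((i:ℝ) + 1) * 0)) :=
    ((Real.tendsto_log_atTop.comp hc).inv_tendsto_atTop.const_mul _).const_sub 1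
  have h3 := ((h2.div h1 (by norm_num)).div hl (by norm_num)).mul_const (1 / ((i:ℝ) + 1))
  have e : (1:ℝ) / 1 / (1 - Real.log ((i:ℝ) + 1) * 0) * (1 / ((i:ℝ) + 1)) = 1 / ((i:ℝ) + 1) := by
    norm_num
  rw [e] at h3
  refine h3.congr' ?_
  filter_upwards [eventually_gt_atTop (i + 1), eventually_ge_atTop 2] with n hn hn2
  have hpi : (0:ℝ) < Nat.primeCounting n := by
    exact_mod_cast pi_pos hn2
  have hn0 : (0:ℝ) < n := by exact_mod_cast (by omega : 0 < n)
  have hln : 0 < Real.log n := Real.log_pos (by exact_mod_cast (by omega : 1 < n))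
  have hfl : ⌊(n:ℝ) / ((i:ℝ) + 1)⌋₊ = n / (i + 1) := by
    have := Nat.floor_div_natCast (n:ℝ) (i + 1)
    push_cast at this
    rw [this, Nat.floor_natCast]
  have hi0 : (0:ℝ) < (i:ℝ) + 1 := by positivity
  have hlt : Real.log ((i:ℝ) + 1) < Real.log n :=
    Real.log_lt_log hi0 (by exact_mod_cast hn)
  have hlog : Real.log ((n:ℝ) / ((i:ℝ) + 1)) = Real.log n - Real.log ((i:ℝ) + 1) :=
    Real.log_div hn0.ne' hi0.ne'
  simp only [Pi.div_apply, Function.comp, Q, hfl, Nat.floor_natCast, hlog]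
  have h5 : Real.log n - Real.log ((i:ℝ) + 1) ≠ 0 := by linarith
  have h6 : 1 - Real.log ((i:ℝ) + 1) * (Real.log n)⁻¹ =
    (Real.log n - Real.log ((i:ℝ) + 1)) / Real.log n := by field_simp
  rw [h6]
  field_simp

end PNTAux

namespace PNTAux
open Filter Topology Asymptotics

noncomputable def T (n : ℕ) : ℝ :=
  ∑ p ∈ (Finset.Icc 1 n).filter Nat.Prime, Real.log ((n / p : ℕ) + 1)

lemma log_tel (m : ℕ) : Real.log ((m:ℝ) + 1) =
    ∑ i ∈ Finset.range m, Real.log (1 + 1 / ((i:ℝ) + 1)) := by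
  induction m with
  | zero => simp
  | succ m ih =>
    rw [Finset.sum_range_succ, ← ih, ← Real.log_mul (by positivity) (by positivity)]
    congr 1
    push_cast
    field_simp

lemma T_eq (n : ℕ) : T n = ∑' i : ℕ, (Nat.primeCounting (n / (i + 1)) : ℝ) *
    Real.log (1 + 1 / ((i:ℝ) + 1)) := by
  rw [tsum_eq_sum (s := Finset.range n)]
  swap
  · intro i hi
    rw [Nat.div_eq_of_lt (by simp at hi; omega)]; simp
  unfold T
  have h1 : ∀ p ∈ (Finset.Icc 1 n).filter Nat.Prime, Real.log ((n / p : ℕ) + 1) =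
      ∑ i ∈ Finset.range n, if i + 1 ≤ n / p then Real.log (1 + 1 / ((i:ℝ) + 1)) else 0 := by
    intro p hp
    rw [log_tel, ← Finset.sum_filter]
    congr 1
    ext i
    have := Nat.div_le_self n p
    simp; omega
  rw [Finset.sum_congr rfl h1, Finset.sum_comm]
  apply Finset.sum_congr rfl
  intro i hi
  rw [← Finset.sum_filter, Finset.sum_const, nsmul_eq_mul]
  congr 2
  rw [← Nat.primesLE_card_eq_primeCounting]
  congr 1
  ext p
  simp only [Finset.mem_filter, Finset.mem_Icc, Nat.mem_primesLE]
  constructor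
  · rintro ⟨⟨⟨h1, h2⟩, h3⟩, h4⟩
    refine ⟨?_, h3⟩
    rw [Nat.le_div_iff_mul_le (by omega)] at h4 ⊢
    rw [mul_comm]; exact h4
  · rintro ⟨h1, h3⟩
    refine ⟨⟨⟨h3.one_le, h1.trans (Nat.div_le_self _ _)⟩, h3⟩, ?_⟩
    rw [Nat.le_div_iff_mul_le (by omega)] at h1
    rw [Nat.le_div_iff_mul_le h3.pos, mul_comm]; exact h1

lemma log_bd (i : ℕ) : Real.log (1 + 1 / ((i:ℝ) + 1)) ≤ 1 / ((i:ℝ) + 1) := by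
  have := Real.log_le_sub_one_of_pos (show 0 < 1 + 1 / ((i:ℝ) + 1) by positivity)
  linarith

lemma log_nn (i : ℕ) : 0 ≤ Real.log (1 + 1 / ((i:ℝ) + 1)) := by
  apply Real.log_nonneg
  have : 0 ≤ 1 / ((i:ℝ) + 1) := by positivity
  linarith

lemma T_tendsto : Tendsto (fun n : ℕ => T n / Nat.primeCounting n) atTop
    (𝓝 (∑' i : ℕ, (1 / ((i:ℝ) + 1)) * Real.log (1 + 1 / ((i:ℝ) + 1)))) := by
  obtain ⟨C, hC⟩ := ratio_bound
  have hs : Summable (fun i : ℕ => C * (1 / ((i:ℝ) + 1) ^ (3/2 : ℝ))) := by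
    apply Summable.mul_left
    have := (Real.summable_one_div_nat_rpow (p := 3/2)).2 (by norm_num)
    have := (summable_nat_add_iff 1).2 this
    simpa using this
  have := tendsto_tsum_of_dominated_convergence (𝓕 := atTop)
    (f := fun (n : ℕ) (i : ℕ) => (Nat.primeCounting (n / (i + 1)) : ℝ) / Nat.primeCounting n *
      Real.log (1 + 1 / ((i:ℝ) + 1))) hs
    (fun i => (ratio_tendsto i).mul_const _) ?_
  · refine this.congr fun n => ?_
    rw [T_eq, ← tsum_div_const]
    congr 1; funext i; ring
  · filter_upwards [hC] with n hn i
    have h1 := hn i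
    have h0 : 0 ≤ (Nat.primeCounting (n / (i + 1)) : ℝ) / Nat.primeCounting n := by positivity
    rw [norm_mul, Real.norm_of_nonneg h0, Real.norm_of_nonneg (log_nn i)]
    have h2 : (1 : ℝ) / ((i:ℝ) + 1) ^ (3/2 : ℝ) = (√((i:ℝ) + 1))⁻¹ * (1 / ((i:ℝ) + 1)) := by
      rw [show (3/2 : ℝ) = 1/2 + 1 by norm_num, Real.rpow_add (by positivity), Real.rpow_one,
        ← Real.sqrt_eq_rpow]
      field_simp
    rw [h2, ← mul_assoc]
    exact mul_le_mul h1 (log_bd i) (log_nn i) (h0.trans h1)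

lemma pow_log_small {c : ℝ} (hc : c < 1) :
    Tendsto (fun n : ℕ => (n:ℝ) ^ c * Real.log ((n:ℝ) + 1) / Nat.primeCounting n) atTop (𝓝 0) := by
  have hn : Tendsto (fun n : ℕ => (n : ℝ)) atTop atTop := tendsto_natCast_atTop_atTop
  have h1 := (Q_tendsto.comp hn).inv₀ (by norm_num)
  have h2 : Tendsto (fun x : ℝ => Real.log x ^ 2 / x ^ (1 - c)) atTop (𝓝 0) := by
    have := isLittleO_log_rpow_rpow_atTop (s := 1 - c) 2 (by linarith)
    simpa using this.tendsto_div_nhds_zero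
  have h3 := ((h2.comp hn).const_mul 2).mul h1
  rw [mul_zero, zero_mul] at h3
  refine squeeze_zero' (Eventually.of_forall fun n => ?_) ?_ h3
  · have : 0 ≤ Real.log ((n:ℝ) + 1) := Real.log_nonneg (by linarith [Nat.cast_nonneg (α := ℝ) n])
    positivity
  · filter_upwards [eventually_ge_atTop 2] with n hn2
    have hpi : (0:ℝ) < Nat.primeCounting n := by exact_mod_cast pi_pos hn2
    have hn2' : (2:ℝ) ≤ n := by exact_mod_cast hn2
    have hln : 0 < Real.log n := Real.log_pos (by linarith)
    have hl : Real.log ((n:ℝ) + 1) ≤ 2 * Real.log n := by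
      have := Real.log_le_log (by positivity) (show (n:ℝ) + 1 ≤ n ^ 2 by nlinarith)
      rwa [Real.log_pow] at this
    have hn0 : (0:ℝ) < n := by linarith
    have hcp : (0:ℝ) < (n:ℝ) ^ c := Real.rpow_pos_of_pos hn0 c
    simp only [Function.comp, Q, Nat.floor_natCast]
    rw [Real.rpow_sub hn0, Real.rpow_one]
    calc _ ≤ (n:ℝ) ^ c * (2 * Real.log n) / Nat.primeCounting n := by gcongr
      _ = _ := by field_simp

end PNTAux

namespace PNTAux
open Filter Topology

lemma prod_log (S : Finset ℕ) (n : ℕ) :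
    Real.log ((∏ p ∈ S, (n / p + 1) : ℕ) : ℝ) = ∑ p ∈ S, Real.log ((n / p : ℕ) + 1) := by
  rw [Nat.cast_prod, Real.log_prod (fun p _ => by positivity)]
  push_cast
  rfl

lemma log_upper {k : ℕ} (hk : Even k) {n : ℕ} (hn : 1 ≤ n) (hpos : 0 < Sk k n) :
    Real.log (Sk k n) ≤ T n + (2 * k + 96) * ((n:ℝ) ^ (5/6 : ℝ) * Real.log ((n:ℝ) + 1)) := by
  set r : ℝ := (n:ℝ) ^ (1/6 : ℝ) with hr
  have hn1 : (1:ℝ) ≤ n := by exact_mod_cast hn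
  have hr1 : 1 ≤ r := Real.one_le_rpow hn1 (by norm_num)
  have hr6 : r ^ 6 = n := by
    rw [hr, ← Real.rpow_natCast, ← Real.rpow_mul (by positivity)]; norm_num
  have hr5 : r ^ 5 = (n:ℝ) ^ (5/6 : ℝ) := by
    rw [hr, ← Real.rpow_natCast, ← Real.rpow_mul (by positivity)]; norm_num
  set s : ℕ := ⌊r⌋₊ + 1 with hs
  have hs1 : 1 ≤ s := by omega
  have hrs : r < s := by rw [hs]; push_cast; exact Nat.lt_floor_add_one r
  have hsr : (s:ℝ) ≤ 2 * r := by
    rw [hs]; push_cast; linarith [Nat.floor_le (show 0 ≤ r by linarith)]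
  have hns : n < s ^ 6 := by
    have : (n:ℝ) < (s:ℝ) ^ 6 := by rw [← hr6]; gcongr
    exact_mod_cast this
  have h := SidonAux.upper hk hs1 hns
  have h2 : Real.log (Sk k n) ≤ Real.log (((∏ p ∈ (Finset.Icc 1 n).filter Nat.Prime, (n / p + 1)) *
      (n + 1) ^ (2 * k + s ^ 4 + 2 * s ^ 5) : ℕ) : ℝ) :=
    Real.log_le_log (by exact_mod_cast hpos) (by exact_mod_cast h)
  rw [Nat.cast_mul, Real.log_mul (by positivity) (by positivity), prod_log, Nat.cast_pow, Real.log_pow] at h2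
  refine h2.trans ?_
  apply add_le_add le_rfl
  push_cast
  rw [← mul_assoc, ← hr5]
  have hl : 0 ≤ Real.log ((n:ℝ) + 1) := Real.log_nonneg (by linarith)
  apply mul_le_mul_of_nonneg_right _ hl
  have hs1' : (1:ℝ) ≤ s := by exact_mod_cast hs1
  have h4 : (s:ℝ) ^ 4 ≤ (s:ℝ) ^ 5 := pow_le_pow_right₀ hs1' (by norm_num)
  have h5 : (s:ℝ) ^ 5 ≤ (2 * r) ^ 5 := by gcongr
  have h6 : (2 * r) ^ 5 = 32 * r ^ 5 := by ring
  have h7 : 1 ≤ r ^ 5 := one_le_pow₀ hr1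
  have h8 : (k:ℝ) * 1 ≤ k * r ^ 5 := by gcongr
  nlinarith

lemma log_lower {k : ℕ} (hk : 1 ≤ k) {n : ℕ} :
    0 < Sk k n ∧ T n - (n:ℝ) ^ (1/2 : ℝ) * Real.log ((n:ℝ) + 1) ≤ Real.log (Sk k n) := by
  have h := SidonAux.lower (n := n) hk
  set S := (Finset.Icc 1 n).filter (fun p => p.Prime ∧ n < p * p) with hS
  have hp : 0 < ∏ p ∈ S, (n / p + 1) := Finset.prod_pos fun p _ => Nat.succ_pos _
  refine ⟨hp.trans_le h, ?_⟩
  have h1 : Real.log ((∏ p ∈ S, (n / p + 1) : ℕ) : ℝ) ≤ Real.log (Sk k n) :=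
    Real.log_le_log (by exact_mod_cast hp) (by exact_mod_cast h)
  rw [prod_log] at h1
  refine le_trans ?_ h1
  set S' := (Finset.Icc 1 n).filter Nat.Prime with hS'
  have hsub : S ⊆ S' := by
    intro p; simp only [hS, hS', Finset.mem_filter]; tauto
  have e := Finset.sum_sdiff hsub (f := fun p => Real.log ((n / p : ℕ) + 1))
  have hT : T n = ∑ p ∈ S', Real.log ((n / p : ℕ) + 1) := rfl
  have hl : 0 ≤ Real.log ((n:ℝ) + 1) := Real.log_nonneg (by linarith [Nat.cast_nonneg (α := ℝ) n])
  have h3 : ∑ p ∈ S' \ S, Real.log ((n / p : ℕ) + 1) ≤ (n:ℝ) ^ (1/2 : ℝ) * Real.log ((n:ℝ) + 1) := by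
    have hb : ∑ p ∈ S' \ S, Real.log ((n / p : ℕ) + 1) ≤ (S' \ S).card • Real.log ((n:ℝ) + 1) := by
      apply Finset.sum_le_card_nsmul
      intro p _
      apply Real.log_le_log (by positivity)
      have : ((n / p : ℕ) : ℝ) ≤ n := by exact_mod_cast Nat.div_le_self n p
      linarith
    refine hb.trans ?_
    rw [nsmul_eq_mul]
    apply mul_le_mul_of_nonneg_right _ hl
    have hc : (S' \ S).card ≤ Nat.sqrt n := by
      have : S' \ S ⊆ Finset.Icc 1 (Nat.sqrt n) := by
        intro p
        simp only [hS, hS', Finset.mem_sdiff, Finset.mem_filter, Finset.mem_Icc]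
        rintro ⟨⟨⟨h1, h2⟩, h3⟩, h4⟩
        refine ⟨h1, Nat.le_sqrt.2 ?_⟩
        by_contra hcon
        exact h4 ⟨⟨h1, h2⟩, h3, by omega⟩
      have := Finset.card_le_card this
      simpa using this
    rw [← Real.sqrt_eq_rpow]
    calc ((S' \ S).card : ℝ) ≤ (Nat.sqrt n : ℝ) := by exact_mod_cast hc
      _ ≤ √(n:ℝ) := Real.nat_sqrt_le_real_sqrt
  linarith

lemma log_Sk_tendsto {k : ℕ} (hk : Even k) (hk4 : 4 ≤ k) :
    Tendsto (fun n : ℕ => Real.log (Sk k n) / Nat.primeCounting n) atTop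
    (𝓝 (∑' i : ℕ, (1 / ((i:ℝ) + 1)) * Real.log (1 + 1 / ((i:ℝ) + 1)))) := by
  have hU := T_tendsto.add ((pow_log_small (c := 5/6) (by norm_num)).const_mul (2 * k + 96 : ℝ))
  have hL := T_tendsto.sub (pow_log_small (c := 1/2) (by norm_num))
  rw [mul_zero, add_zero] at hU
  rw [sub_zero] at hL
  refine tendsto_of_tendsto_of_tendsto_of_le_of_le' hL hU ?_ ?_
  · filter_upwards with n
    rw [← sub_div]
    have := (log_lower (k := k) (n := n) (by omega)).2
    gcongr
  · filter_upwards [eventually_ge_atTop 1] with n hn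
    rw [← mul_div_assoc, ← add_div]
    have := log_upper hk hn (log_lower (k := k) (n := n) (by omega)).1
    gcongr

end PNTAux

theorem count_mulKSidon_even :
    ∀ k : ℕ, Even k → 4 ≤ k →
      Filter.Tendsto
        (fun n : ℕ => (Sk k n : ℝ) ^ ((1 : ℝ) / (Nat.primeCounting n : ℝ)))
        Filter.atTop (nhds ((2 : ℝ) ^ alpha)) := by
  intro k hk hk4
  have h := (Real.continuous_exp.tendsto _).comp (PNTAux.log_Sk_tendsto hk hk4)
  have e : (2:ℝ) ^ alpha =
      Real.exp (∑' i : ℕ, (1 / ((i:ℝ) + 1)) * Real.log (1 + 1 / ((i:ℝ) + 1))) := by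
    rw [Real.rpow_def_of_pos (by norm_num), alpha, ← tsum_mul_left]
    congr 2; funext i
    rw [Real.logb]
    have : Real.log 2 ≠ 0 := (Real.log_pos (by norm_num)).ne'
    field_simp
  rw [e]
  refine h.congr fun n => ?_
  have hpos := (PNTAux.log_lower (k := k) (n := n) (by omega)).1
  rw [Real.rpow_def_of_pos (by exact_mod_cast hpos)]
  simp only [Function.comp]
  congr 1
  ring
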